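/- Let λ be a d-invariant rational lamination and L an infinite λ-unlinked class. If (θ, θ') is a connected component of (R/Z) \ closure(L), then θ and θ' are rational and λ-equivalent. -/

import Mathlib

noncomputable section
open Set Function

/-- The circle `ℝ/ℤ`. -/
abbrev Circle1 := AddCircle (1 : ℝ)

/-- Multiplication by `d` on the circle. -/
def md (d : ℕ) (x : Circle1) : Circle1 := d • x

/-- The rational angles `ℚ/ℤ ⊆ ℝ/ℤ`. -/
def ratC : Set Circle1 := {x | ∃ q : ℚ, x = ((q : ℝ) : Circle1)}

/-- `A` and `B` are unlinked: `B` is contained in a single connected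
component of the complement of `A`. -/
def Unlinked (A B : Set Circle1) : Prop :=
  ∃ x ∈ Aᶜ, B ⊆ connectedComponentIn Aᶜ x

/-- `C` is a connected component of `S`. -/
def IsCompOf (C S : Set Circle1) : Prop :=
  ∃ x ∈ S, C = connectedComponentIn S x

/-- The class of `x` under a relation `r`. -/
def relClass (r : Circle1 → Circle1 → Prop) (x : Circle1) : Set Circle1 := {y | r x y}

/-- A rational lamination: a closed equivalence relation on `ℚ/ℤ` with finite,
pairwise unlinked classes. -/
structure RatLam where
  rel : Circle1 → Circle1 → Prop
  rel_rat : ∀ x y, rel x y → x ∈ ratC ∧ y ∈ ratC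
  refl : ∀ x ∈ ratC, rel x x
  symm : ∀ x y, rel x y → rel y x
  trans : ∀ x y z, rel x y → rel y z → rel x z
  closed' : ∀ x ∈ ratC, ∀ y ∈ ratC,
    (x, y) ∈ closure {p : Circle1 × Circle1 | rel p.1 p.2} → rel x y
  finiteClass : ∀ x, (relClass rel x).Finite
  unlinkedClass : ∀ x y, ¬ rel x y → Unlinked (relClass rel x) (relClass rel y)

/-- `m_d` maps `A` onto `B` in a consecutive-preserving way: the image of `A` is `B`
and the connected components of the complement of `A` are sent to components of the
complement of `B` endpoint-wise. -/
def ConsecutiveImage (d : ℕ) (A B : Set Circle1) : Prop :=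
  md d '' A = B ∧
    ∀ C, IsCompOf C Aᶜ → ∃ C', IsCompOf C' Bᶜ ∧ frontier C' = md d '' frontier C

/-- A `d`-invariant rational lamination. -/
structure InvRatLam (d : ℕ) extends RatLam where
  invariant : ∀ x ∈ ratC,
    ConsecutiveImage d (relClass rel x) (relClass rel (md d x))

/-- `m_d : A → m_d(A)` is `δ`-to-one. -/
def classDeg (d : ℕ) (A : Set Circle1) (δ : ℕ) : Prop :=
  ∀ y ∈ md d '' A, Set.ncard {x | x ∈ A ∧ md d x = y} = δ

/-- The `λ`-unlinked relation on irrational angles: `θ ~ θ'` iff they lie in the same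
connected component of the complement of every `λ`-class. -/
def UnlRel (r : Circle1 → Circle1 → Prop) (θ θ' : Circle1) : Prop :=
  θ ∉ ratC ∧ θ' ∉ ratC ∧
    (θ = θ' ∨ ∀ x ∈ ratC, θ' ∈ connectedComponentIn (relClass r x)ᶜ θ)

/-- `L` is a `λ`-unlinked class. -/
def IsUnlClass (r : Circle1 → Circle1 → Prop) (L : Set Circle1) : Prop :=
  ∃ θ, θ ∉ ratC ∧ L = {θ' | UnlRel r θ θ'}

variable {d : ℕ} {R : ℝ → ℝ → Prop}

/-!
Lift the lamination to `ℝ`, so that classes become sets of chords. A gap of an unlinked class is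
spanned either by a chord or by a limit of chords lying inside it. An expanding map cannot make only
one end of a limit leaf preperiodic, so its ends are both rational, in which case closedness turns
the leaf into a chord, or both irrational. In the second case the end `u` lies in the class. Since
only finitely many pairwise inequivalent classes can be split by `x ↦ d x`, some image of the class
of `u` wanders: its further images lie in pairwise different classes. Two classes are separated by a
chord, so by pigeonhole `x ↦ d x` eventually preserves the cyclic order on the orbit.

A wandering class whose orbit preserves the cyclic order is finite. Inscribe a polygon with more
than `2 d ^ 2 + 1` sides. Three well-separated points cannot recur along a wandering orbit, so the
longest side has lengths accumulating at `1`; take a time at which it sets a record. Among the sides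
other than the record one, two have the same integer data when their length last exceeds `1 / d`,
and the chord between their classes confines one of the image polygons to an arc cut off by the
other. That polygon then has a side exceeding the record. Classes with finite image class are
finite, so the original class is finite as well.
-/

/-- The lift to `ℝ` of a rational lamination of `ℝ/ℤ`: a translation-invariant equivalence relation
on the rational numbers, whose pairs `R a b` are the chords. Unlinkedness of classes is expressed
chord by chord. -/
structure LiftedLam (R : ℝ → ℝ → Prop) : Prop where
  rational_left {x y : ℝ} : R x y → ¬ Irrational x
  refl {x : ℝ} : ¬ Irrational x → R x x
  symm {x y : ℝ} : R x y → R y x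
  trans {x y z : ℝ} : R x y → R y z → R x z
  add_one {x : ℝ} : ¬ Irrational x → R x (x + 1)
  closed {x y : ℝ} : ¬ Irrational x → ¬ Irrational y →
    (∀ ε > 0, ∃ a b, R a b ∧ |a - x| < ε ∧ |b - y| < ε) → R x y
  finite_inter_Icc (x a b : ℝ) : {y | R x y ∧ y ∈ Icc a b}.Finite
  unlinked {a b c e : ℝ} : a < b → b < c → c < e → e < a + 1 → R a c → R b e → R a b

/-- The lift to `ℝ` of a rational lamination whose classes are mapped onto classes by `x ↦ d x`. -/
structure InvLiftedLam (d : ℕ) (R : ℝ → ℝ → Prop) : Prop extends LiftedLam R where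
  two_le : 2 ≤ d
  map_mul {x y : ℝ} : R x y → R (d * x) (d * y)
  exists_preimage {x z : ℝ} : ¬ Irrational x → R (d * x) z → ∃ y, ∃ k : ℤ, R x y ∧ d * y = z + k

/-- The image of `s` in `ℝ/ℤ` lies on the image of the open interval `(a, b)`. -/
def MemArc (a b s : ℝ) : Prop := ∃ k : ℤ, s + k ∈ Ioo a b

/-- Two points are unlinked-equivalent if no chord separates them; on irrational points this is the
lift of the `λ`-unlinked relation. -/
def UnlEquiv (R : ℝ → ℝ → Prop) (s t : ℝ) : Prop :=
  ∀ a b, R a b → a < b → b < a + 1 → (MemArc a b s ↔ MemArc a b t)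

/-- The leaf `(u, v)` is a limit of chords lying strictly inside it. -/
def LimitLeaf (R : ℝ → ℝ → Prop) (u v : ℝ) : Prop :=
  ∀ ε > 0, ∃ a b, R a b ∧ a ∈ Ioo u (u + ε) ∧ b ∈ Ioo (v - ε) v

/-- The mirror image of a relation on `ℝ` under `x ↦ -x`. -/
def negRel (R : ℝ → ℝ → Prop) (x y : ℝ) : Prop := R (-x) (-y)

lemma negRel_negRel : negRel (negRel R) = R := by
  simp only [funext_iff, negRel, neg_neg, implies_true]

lemma exists_int_add_mem_Ico (u w : ℝ) : ∃ k : ℤ, u + k ∈ Ico w (w + 1) :=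
  ⟨⌈w - u⌉, by linarith [Int.le_ceil (w - u)], by linarith [Int.ceil_lt_add_one (w - u)]⟩

lemma not_memArc_of_le {a b s : ℝ} (ha : s ≤ a) (hb : b ≤ s + 1) : ¬ MemArc a b s := by
  rintro ⟨l, hal, hlb⟩
  have pos : (0 : ℝ) < l := by linarith
  have lt_one : (l : ℝ) < 1 := by linarith
  norm_cast at pos lt_one
  omega

namespace LiftedLam

lemma rational_right (h : LiftedLam R) {x y : ℝ} (hr : R x y) : ¬ Irrational y :=
  h.rational_left (h.symm hr)

lemma self_add_int (h : LiftedLam R) {x : ℝ} (hx : ¬ Irrational x) (k : ℤ) : R x (x + k) := by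
  have step (l : ℤ) : R (x + l) (x + l + 1) := h.add_one (by rwa [irrational_add_intCast_iff])
  induction k using Int.induction_on with
  | zero => simpa using h.refl hx
  | succ n ih =>
    have := h.trans ih (step n)
    push_cast at this ⊢
    rwa [← add_assoc]
  | pred n ih =>
    refine h.trans ih (h.symm ?_)
    convert step (-n - 1) using 1
    push_cast
    ring

lemma add_int_right (h : LiftedLam R) {x y : ℝ} (hr : R x y) (k : ℤ) : R x (y + k) :=
  h.trans hr (h.self_add_int (h.rational_right hr) k)

lemma add_int (h : LiftedLam R) {x y : ℝ} (hr : R x y) (k l : ℤ) : R (x + k) (y + l) :=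
  h.symm (h.add_int_right (h.symm (h.add_int_right hr l)) k)

lemma swap_add_one (h : LiftedLam R) {a b : ℝ} (hr : R a b) : R b (a + 1) := by
  exact_mod_cast h.add_int_right (h.symm hr) 1

lemma neg (h : LiftedLam R) : LiftedLam (negRel R) where
  rational_left hr := by simpa using h.rational_left hr
  refl hx := h.refl (by simpa using hx)
  symm := h.symm
  trans := h.trans
  add_one {x} hx := by
    have := h.self_add_int (x := -x) (by simpa using hx) (-1)
    simpa only [negRel, neg_add, Int.cast_neg, Int.cast_one] using this
  closed {x y} hx hy happrox := by
    refine h.closed (by simpa using hx) (by simpa using hy) fun ε hε => ?_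
    obtain ⟨a, b, hr, ha, hb⟩ := happrox ε hε
    exact ⟨-a, -b, hr, by rwa [neg_sub_neg, abs_sub_comm], by rwa [neg_sub_neg, abs_sub_comm]⟩
  finite_inter_Icc x a b := by
    refine ((h.finite_inter_Icc (-x) (-b) (-a)).image Neg.neg).subset ?_
    rintro y ⟨hr, hay, hyb⟩
    exact ⟨-y, ⟨hr, by linarith, by linarith⟩, neg_neg y⟩
  unlinked hab hbc hce hea hac hbe :=
    h.trans hac <| h.trans (h.symm (h.unlinked (neg_lt_neg hce) (neg_lt_neg hbc) (neg_lt_neg hab)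
      (by linarith) (h.symm hbe) (h.symm hac))) (h.symm hbe)

lemma exists_pos_not_rel_Ioo_left (h : LiftedLam R) (a v : ℝ) :
    ∃ ε > 0, ∀ y ∈ Ioo (v - ε) v, ¬ R a y := by
  have fin : {y | R a y ∧ y ∈ Icc (v - 1) v}.Finite := h.finite_inter_Icc a (v - 1) v
  have nhds := (fin.subset sdiff_subset).isClosed.isOpen_compl.mem_nhds
    (show v ∈ ({y | R a y ∧ y ∈ Icc (v - 1) v} \ {v})ᶜ by simp)
  obtain ⟨ε, hε, hball⟩ := Metric.mem_nhds_iff.1 nhds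
  refine ⟨min ε 1, by positivity, fun y hy hr => ?_⟩
  have hy' := hy.1
  rw [sub_lt_iff_lt_add, ← sub_lt_iff_lt_add', lt_min_iff] at hy'
  have mem_ball : y ∈ Metric.ball v ε := by
    rw [Metric.mem_ball, dist_comm, Real.dist_eq, abs_of_pos (sub_pos.2 hy.2)]
    exact hy'.1
  exact hball mem_ball ⟨⟨hr, by linarith, hy.2.le⟩, hy.2.ne⟩

lemma exists_pos_not_rel_Ioo_right (h : LiftedLam R) (a v : ℝ) :
    ∃ ε > 0, ∀ y ∈ Ioo v (v + ε), ¬ R a y := by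
  obtain ⟨ε, hε, hfree⟩ := h.neg.exists_pos_not_rel_Ioo_left (-a) (-v)
  refine ⟨ε, hε, fun y hy hr => hfree (-y) ⟨by linarith [hy.2], neg_lt_neg hy.1⟩ ?_⟩
  simpa only [negRel, neg_neg] using hr

end LiftedLam

namespace UnlEquiv

lemma refl (s : ℝ) : UnlEquiv R s s := fun _ _ _ _ _ => Iff.rfl

lemma symm {s t : ℝ} (hst : UnlEquiv R s t) : UnlEquiv R t s :=
  fun a b hr hab hba => (hst a b hr hab hba).symm

lemma trans {s t r : ℝ} (hst : UnlEquiv R s t) (htr : UnlEquiv R t r) : UnlEquiv R s r :=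
  fun a b hr hab hba => (hst a b hr hab hba).trans (htr a b hr hab hba)

lemma self_add_int (s : ℝ) (k : ℤ) : UnlEquiv R s (s + k) := by
  refine fun a b _ _ _ => ⟨fun ⟨l, hl⟩ => ⟨l - k, ?_⟩, fun ⟨l, hl⟩ => ⟨k + l, ?_⟩⟩
  · rwa [Int.cast_sub, add_assoc, add_sub_cancel]
  · rwa [Int.cast_add, ← add_assoc]

lemma add_int_right {s t : ℝ} (hst : UnlEquiv R s t) (k : ℤ) : UnlEquiv R s (t + k) :=
  hst.trans (self_add_int t k)

lemma add_int_left {s t : ℝ} (hst : UnlEquiv R s t) (k : ℤ) : UnlEquiv R (s + k) t :=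
  (hst.symm.add_int_right k).symm

lemma not_separated {s t a b : ℝ} (hst : UnlEquiv R s t) (hr : R a b) (hsa : s < a) (hat : a < t)
    (htb : t < b) (hbs : b < s + 1) : False :=
  not_memArc_of_le hsa.le hbs.le <|
    (hst a b hr (hat.trans htb) (by linarith)).2 ⟨0, by simpa using ⟨hat, htb⟩⟩

lemma lt_of_rel {s t a b : ℝ} (hst : UnlEquiv R s t) (h : LiftedLam R) (ht : Irrational t)
    (hr : R a b) (hsa : s < a) (hat : a < t) (hbs : b < s + 1) : b < t := by
  rcases lt_trichotomy t b with htb | rfl | hbt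
  · exact (hst.not_separated hr hsa hat htb hbs).elim
  · exact absurd ht (h.rational_right hr)
  · exact hbt

end UnlEquiv

namespace LiftedLam

lemma lt_or_lt_of_not_memArc (h : LiftedLam R) {a b s : ℝ} (hr : R a b) (hs : Irrational s)
    (hout : ¬ MemArc a b s) (k : ℤ) : s + k < a ∨ b < s + k := by
  have hsk : Irrational (s + k) := irrational_add_intCast_iff.2 hs
  by_contra! hc
  exact hout ⟨k, hc.1.lt_of_ne fun he => h.rational_left hr (he ▸ hsk),
    hc.2.lt_of_ne fun he => h.rational_right hr (he ▸ hsk)⟩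

lemma exists_separating_chord (h : LiftedLam R) {s t : ℝ} (hs : Irrational s) (ht : Irrational t)
    (hst : s < t) (hts : t < s + 1) (hsep : ¬ UnlEquiv R s t) :
    ∃ a b, R a b ∧ a ∈ Ioo s t ∧ b ∈ Ioo t (s + 1) := by
  simp only [UnlEquiv, not_forall] at hsep
  obtain ⟨a, b, hr, -, -, hsep⟩ := hsep
  rcases not_iff.1 hsep, em (MemArc a b t) with ⟨hiff, ⟨k, hak, hkb⟩ | htout⟩
  · have hsout := hiff.2 ⟨k, hak, hkb⟩
    have below := (h.lt_or_lt_of_not_memArc hr hs hsout k).resolve_right (by linarith)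
    have above := (h.lt_or_lt_of_not_memArc hr hs hsout (k + 1)).resolve_left
      (by push_cast; linarith)
    push_cast at above
    refine ⟨a + (-k : ℤ), b + (-k : ℤ), h.add_int hr _ _, ?_, ?_⟩ <;>
      constructor <;> push_cast <;> linarith
  · obtain ⟨k, hak, hkb⟩ := not_not.1 (mt hiff.1 htout)
    have above := (h.lt_or_lt_of_not_memArc hr ht htout k).resolve_left (by linarith)
    have below := (h.lt_or_lt_of_not_memArc hr ht htout (k - 1)).resolve_right
      (by push_cast; linarith)
    push_cast at below
    refine ⟨b + (-k : ℤ), a + (1 - k : ℤ), h.add_int (h.symm hr) _ _, ?_, ?_⟩ <;>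
      constructor <;> push_cast <;> linarith

end LiftedLam

/-- The irrational points unlinked-equivalent to `s`; the lift of the `λ`-unlinked class of `s`. -/
def unlClass (R : ℝ → ℝ → Prop) (s : ℝ) : Set ℝ := {t | Irrational t ∧ UnlEquiv R s t}

lemma mem_unlClass_self {s : ℝ} (hs : Irrational s) : s ∈ unlClass R s := ⟨hs, .refl s⟩

lemma add_int_mem_unlClass {s t : ℝ} (ht : t ∈ unlClass R s) (k : ℤ) : t + k ∈ unlClass R s :=
  ⟨irrational_add_intCast_iff.2 ht.1, ht.2.add_int_right k⟩

namespace LiftedLam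

lemma exists_chord_disjoint_unlClass (h : LiftedLam R) {s t : ℝ} (hs : Irrational s)
    (ht : Irrational t) (hsep : ¬ UnlEquiv R s t) :
    ∃ a b, R a b ∧ t ∈ Ioo a b ∧ Disjoint (Ioo a b) (unlClass R s) := by
  obtain ⟨k, hk⟩ := exists_int_add_mem_Ico s (t - 1)
  have hsk : Irrational (s + k) := irrational_add_intCast_iff.2 hs
  have hlt : t < s + k + 1 := by
    refine lt_of_le_of_ne (by linarith [hk.1]) ?_
    rintro rfl
    refine hsep ?_
    exact_mod_cast (UnlEquiv.self_add_int s k).add_int_right 1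
  obtain ⟨a, b, hr, ha, hb⟩ := h.exists_separating_chord hsk ht (by linarith [hk.2]) hlt
    fun he => hsep ((UnlEquiv.self_add_int s k).trans he)
  exact ⟨a, b, hr, ⟨ha.2, hb.1⟩, disjoint_left.2 fun x hx hxs =>
    (hxs.2.add_int_left k).not_separated hr ha.1 hx.1 hx.2 hb.2⟩

lemma mem_unlClass_of_mem_closure (h : LiftedLam R) {s u : ℝ} (hs : Irrational s)
    (hu : Irrational u) (hus : u ∈ closure (unlClass R s)) : u ∈ unlClass R s := by
  refine ⟨hu, ?_⟩
  by_contra hsep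
  obtain ⟨a, b, -, hab, hdisj⟩ := h.exists_chord_disjoint_unlClass hs hu hsep
  exact (hdisj.closure_right isOpen_Ioo).notMem_of_mem_left hab hus

end LiftedLam

/-! ### Limit leaves -/

lemma LimitLeaf.neg {u v : ℝ} (h : LiftedLam R) (hl : LimitLeaf R u v) :
    LimitLeaf (negRel R) (-v) (-u) := by
  intro ε hε
  obtain ⟨a, b, hr, ha, hb⟩ := hl ε hε
  refine ⟨-b, -a, ?_, ⟨by linarith [hb.2], by linarith [hb.1]⟩,
    ⟨by linarith [ha.2], by linarith [ha.1]⟩⟩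
  simpa only [negRel, neg_neg] using h.symm hr

lemma LimitLeaf.exists_chord {u v u' v' : ℝ} (hl : LimitLeaf R u v) (hu : u < u') (hv : v' < v) :
    ∃ a b, R a b ∧ a ∈ Ioo u u' ∧ b ∈ Ioo v' v := by
  obtain ⟨a, b, hr, ha, hb⟩ := hl (min (u' - u) (v - v')) (by simp [hu, hv])
  exact ⟨a, b, hr, ⟨ha.1, by linarith [ha.2, min_le_left (u' - u) (v - v')]⟩,
    by linarith [hb.1, min_le_right (u' - u) (v - v')], hb.2⟩

namespace LiftedLam

lemma add_int_limitLeaf (h : LiftedLam R) {u v : ℝ} (hl : LimitLeaf R u v) (k l : ℤ) :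
    LimitLeaf R (u + k) (v + l) := by
  intro ε hε
  obtain ⟨a, b, hr, ha, hb⟩ := hl ε hε
  exact ⟨a + k, b + l, h.add_int hr k l, ⟨by linarith [ha.1], by linarith [ha.2]⟩,
    by linarith [hb.1], by linarith [hb.2]⟩

lemma rel_of_limitLeaf (h : LiftedLam R) {u v : ℝ} (hl : LimitLeaf R u v) (hu : ¬ Irrational u)
    (hv : ¬ Irrational v) : R u v := by
  refine h.closed hu hv fun ε hε => ?_
  obtain ⟨a, b, hr, ha, hb⟩ := hl ε hε
  exact ⟨a, b, hr, abs_lt.2 ⟨by linarith [ha.1], by linarith [ha.2]⟩,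
    abs_lt.2 ⟨by linarith [hb.1], by linarith [hb.2]⟩⟩

lemma rel_or_limitLeaf (h : LiftedLam R) {p q : ℝ}
    (happrox : ∀ ε > 0, ∃ a b, R a b ∧ a ∈ Ico p (p + ε) ∧ b ∈ Ioc (q - ε) q) :
    R p q ∨ LimitLeaf R p q := by
  by_contra! hc
  obtain ⟨hrel, hlimit⟩ := hc
  simp only [LimitLeaf, not_forall, not_exists, not_and] at hlimit
  obtain ⟨ε₀, hε₀, inside⟩ := hlimit
  obtain ⟨ε₁, hε₁, from_p⟩ := h.exists_pos_not_rel_Ioo_left p q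
  obtain ⟨ε₂, hε₂, from_q⟩ := h.exists_pos_not_rel_Ioo_right q p
  obtain ⟨a, b, hr, ⟨hpa, hap⟩, hqb, hbq⟩ := happrox (min ε₀ (min ε₁ ε₂)) (by positivity)
  obtain ⟨ha₀, -, ha₂⟩ : a - p < ε₀ ∧ a - p < ε₁ ∧ a - p < ε₂ := by
    simpa only [lt_min_iff] using (by linarith : a - p < min ε₀ (min ε₁ ε₂))
  obtain ⟨hb₀, hb₁, -⟩ : q - b < ε₀ ∧ q - b < ε₁ ∧ q - b < ε₂ := by
    simpa only [lt_min_iff] using (by linarith : q - b < min ε₀ (min ε₁ ε₂))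
  rcases hpa.eq_or_lt with rfl | hpa <;> rcases hbq.eq_or_lt with rfl | hbq
  · exact hrel hr
  · exact from_p b ⟨by linarith, hbq⟩ hr
  · exact from_q a ⟨hpa, by linarith⟩ (h.symm hr)
  · exact inside a b hr ⟨hpa, by linarith⟩ ⟨by linarith, hbq⟩

lemma limitLeaf_left_not_lt (h : LiftedLam R) {u u' v : ℝ} (hl : LimitLeaf R u v)
    (hl' : LimitLeaf R u' v) (huv : v ≤ u + 1) (hu'v : u' < v) : ¬ u < u' := by
  intro hlt
  obtain ⟨a, b, hr, ha, hb⟩ := hl.exists_chord hlt hu'v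
  obtain ⟨ε, hε, hfree⟩ := h.exists_pos_not_rel_Ioo_left a v
  obtain ⟨a', b', hr', ha', hb'⟩ := hl'.exists_chord hb.1 (max_lt hb.2 (sub_lt_self v hε))
  obtain ⟨hbb', hεb'⟩ := max_lt_iff.1 hb'.1
  have haa' : R a a' := h.unlinked (ha.2.trans ha'.1) ha'.2 hbb' (by linarith [ha.1, hb'.2]) hr hr'
  exact hfree b' ⟨hεb', hb'.2⟩ (h.trans haa' hr')

lemma limitLeaf_left_unique (h : LiftedLam R) {u u' v : ℝ} (hl : LimitLeaf R u v)
    (hl' : LimitLeaf R u' v) : ∃ k : ℤ, u' = u + k := by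
  obtain ⟨k, hk⟩ := exists_int_add_mem_Ico u (v - 1)
  obtain ⟨k', hk'⟩ := exists_int_add_mem_Ico u' (v - 1)
  have shifted : LimitLeaf R (u + k) v := by simpa using h.add_int_limitLeaf hl k 0
  have shifted' : LimitLeaf R (u' + k') v := by simpa using h.add_int_limitLeaf hl' k' 0
  have hle := h.limitLeaf_left_not_lt shifted shifted' (by linarith [hk.1]) (by linarith [hk'.2])
  have hge := h.limitLeaf_left_not_lt shifted' shifted (by linarith [hk'.1]) (by linarith [hk.2])
  exact ⟨k - k', by push_cast; linarith⟩

lemma unlEquiv_of_limitLeaf (h : LiftedLam R) {z w : ℝ} (hl : LimitLeaf R z w) (hz : Irrational z)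
    (hw : Irrational w) (hzw : z < w) (hwz : w ≤ z + 1) : UnlEquiv R z w := by
  rcases hwz.eq_or_lt with rfl | hwz
  · exact_mod_cast UnlEquiv.self_add_int (R := R) z 1
  by_contra hsep
  obtain ⟨e, f, hr, he, hf⟩ := h.exists_separating_chord hz hw hzw hwz hsep
  obtain ⟨ε, hε, hfree⟩ := h.exists_pos_not_rel_Ioo_left e w
  obtain ⟨a, b, hr', ha, hb⟩ := hl.exists_chord he.1 (max_lt he.2 (sub_lt_self w hε))
  obtain ⟨heb, hεb⟩ := max_lt_iff.1 hb.1
  have hae : R a e := h.unlinked ha.2 heb (hb.2.trans hf.1) (by linarith [ha.1, hf.2]) hr' hr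
  exact hfree b ⟨hεb, hb.2⟩ (h.trans (h.symm hae) hr')

end LiftedLam

lemma LimitLeaf.not_unlEquiv {z w t : ℝ} (hl : LimitLeaf R z w) (hwz : w ≤ z + 1)
    (ht : t ∈ Ioo z w) : ¬ UnlEquiv R w t := by
  intro hwt
  obtain ⟨a, b, hr, ha, hb⟩ := hl.exists_chord ht.1 ht.2
  refine (hwt.add_int_left (-1)).not_separated hr ?_ ha.2 hb.1 ?_ <;> push_cast <;>
    linarith [ha.1, hb.2]

lemma exists_ne_pow_mul_eq_add_int (d : ℕ) (q : ℚ) :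
    ∃ i j : ℕ, i ≠ j ∧ ∃ z : ℤ, (d : ℝ) ^ i * q = d ^ j * q + z := by
  have : NeZero q.den := ⟨q.den_nz⟩
  obtain ⟨i, j, hij, heq⟩ :=
    Finite.exists_ne_map_eq_of_infinite fun n : ℕ => (((d : ℤ) ^ n : ℤ) : ZMod q.den)
  obtain ⟨z, hz⟩ := (ZMod.intCast_eq_intCast_iff_dvd_sub _ _ _).1 heq.symm
  refine ⟨i, j, hij, z * q.num, ?_⟩
  have hz' : (d : ℝ) ^ i - d ^ j = q.den * z := by exact_mod_cast hz
  have hq : (q.den : ℝ) * q = q.num := by exact_mod_cast q.den_mul_eq_num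
  push_cast
  linear_combination (q : ℝ) * hz' + z * hq

lemma pow_mul_ne_pow_mul_add_int (hd : 2 ≤ d) {u : ℝ} (hu : Irrational u) {i j : ℕ} (hij : i ≠ j)
    (k : ℤ) : (d : ℝ) ^ i * u ≠ d ^ j * u + k := by
  intro heq
  have hne : (d : ℤ) ^ i - (d : ℤ) ^ j ≠ 0 := by
    rw [sub_ne_zero]
    exact_mod_cast fun hpow => hij (Nat.pow_right_injective hd hpow)
  have hirr := irrational_intCast_mul_iff.2 ⟨hne, hu⟩
  refine hirr ⟨k, ?_⟩
  push_cast
  linarith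

namespace InvLiftedLam

lemma two_le_cast (h : InvLiftedLam d R) : (2 : ℝ) ≤ d := by exact_mod_cast h.two_le

lemma cast_pos (h : InvLiftedLam d R) : (0 : ℝ) < d := by linarith [h.two_le_cast]

lemma neg (h : InvLiftedLam d R) : InvLiftedLam d (negRel R) where
  toLiftedLam := h.toLiftedLam.neg
  two_le := h.two_le
  map_mul hr := by simpa only [negRel, mul_neg] using h.map_mul hr
  exists_preimage {x z} hx hr := by
    obtain ⟨y, k, hxy, hy⟩ := h.exists_preimage (x := -x) (z := -z) (by simpa using hx)
      (by simpa only [negRel, mul_neg] using hr)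
    refine ⟨-y, -k, by simpa only [negRel, neg_neg] using hxy, ?_⟩
    push_cast
    linarith

lemma irrational_mul (h : InvLiftedLam d R) {x : ℝ} : Irrational (d * x) ↔ Irrational x := by
  have := h.two_le
  rw [irrational_natCast_mul_iff, and_iff_right (by omega)]

lemma irrational_pow_mul (h : InvLiftedLam d R) {x : ℝ} (hx : Irrational x) (n : ℕ) :
    Irrational ((d : ℝ) ^ n * x) := by
  have := h.two_le
  exact_mod_cast hx.natCast_mul (pow_ne_zero n (by omega : d ≠ 0))

lemma exists_preimage_mem_Ico (h : InvLiftedLam d R) {x z : ℝ} (hr : R (d * x) z) (w : ℝ) :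
    ∃ y, ∃ k : ℤ, R x y ∧ d * y = z + k ∧ y ∈ Ico w (w + 1) := by
  obtain ⟨y, k, hxy, hy⟩ := h.exists_preimage (mt h.irrational_mul.2 (h.rational_left hr)) hr
  obtain ⟨j, hj⟩ := exists_int_add_mem_Ico y w
  refine ⟨y + j, k + d * j, h.add_int_right hxy j, ?_, hj⟩
  push_cast
  linarith

lemma limitLeaf_mul (h : InvLiftedLam d R) {u v : ℝ} (hl : LimitLeaf R u v) :
    LimitLeaf R (d * u) (d * v) := by
  intro ε hε
  have hd := h.cast_pos
  obtain ⟨a, b, hr, ha, hb⟩ := hl (ε / d) (by positivity)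
  have hε' : d * (ε / d) = ε := mul_div_cancel₀ ε hd.ne'
  refine ⟨d * a, d * b, h.map_mul hr, ⟨?_, ?_⟩, ?_, ?_⟩ <;>
    nlinarith [ha.1, ha.2, hb.1, hb.2]

lemma limitLeaf_pow_mul (h : InvLiftedLam d R) {u v : ℝ} (hl : LimitLeaf R u v) (n : ℕ) :
    LimitLeaf R (d ^ n * u) (d ^ n * v) := by
  induction n with
  | zero => simpa using hl
  | succ n ih => simpa only [pow_succ', mul_assoc] using h.limitLeaf_mul ih

/-- If the right end is preperiodic, then so is the left end, which it determines. -/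
lemma limitLeaf_left_rational (h : InvLiftedLam d R) {u v : ℝ} (hl : LimitLeaf R u v)
    (hv : ¬ Irrational v) : ¬ Irrational u := by
  intro hu
  obtain ⟨q, rfl⟩ := not_not.1 hv
  obtain ⟨i, j, hij, z, hz⟩ := exists_ne_pow_mul_eq_add_int d q
  have image_j : LimitLeaf R (d ^ j * u) (d ^ i * q) := by
    simpa [← hz] using h.add_int_limitLeaf (h.limitLeaf_pow_mul hl j) 0 z
  obtain ⟨k, hk⟩ := h.limitLeaf_left_unique (h.limitLeaf_pow_mul hl i) image_j
  exact pow_mul_ne_pow_mul_add_int h.two_le hu hij.symm k hk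

lemma limitLeaf_right_rational (h : InvLiftedLam d R) {u v : ℝ} (hl : LimitLeaf R u v)
    (hu : ¬ Irrational u) : ¬ Irrational v := by
  simpa using h.neg.limitLeaf_left_rational (hl.neg h.toLiftedLam) (by simpa using hu)

end InvLiftedLam

/-! ### Gaps of unlinked classes -/

/-- A chord of `R` with both ends in `[u, v]`. -/
def Subchord (R : ℝ → ℝ → Prop) (u v a b : ℝ) : Prop := R a b ∧ u ≤ a ∧ a < b ∧ b ≤ v

/-- The points lying under some chord with both ends in `[u, v]`. -/
def coveredSet (R : ℝ → ℝ → Prop) (u v : ℝ) : Set ℝ := {x | ∃ a b, Subchord R u v a b ∧ x ∈ Ioo a b}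

/-- A leaf `(u, v)` under which every irrational point is covered by a chord. The leaf may go once
around the circle, but then it must be irrational. -/
structure CoveredLeaf (R : ℝ → ℝ → Prop) (u v : ℝ) : Prop where
  lt : u < v
  le_add_one : v ≤ u + 1
  irrational_of_eq : v = u + 1 → Irrational u
  mem_coveredSet : ∀ t ∈ Ioo u v, Irrational t → t ∈ coveredSet R u v

lemma Subchord.neg {u v a b : ℝ} (h : LiftedLam R) (hc : Subchord R u v a b) :
    Subchord (negRel R) (-v) (-u) (-b) (-a) := by
  obtain ⟨hr, hua, hab, hbv⟩ := hc
  refine ⟨?_, neg_le_neg hbv, neg_lt_neg hab, neg_le_neg hua⟩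
  simpa only [negRel, neg_neg] using h.symm hr

lemma neg_mem_coveredSet {u v x : ℝ} (h : LiftedLam R) (hx : x ∈ coveredSet R u v) :
    -x ∈ coveredSet (negRel R) (-v) (-u) := by
  obtain ⟨a, b, hc, hax, hxb⟩ := hx
  exact ⟨-b, -a, hc.neg h, neg_lt_neg hxb, neg_lt_neg hax⟩

lemma isOpen_coveredSet (u v : ℝ) : IsOpen (coveredSet R u v) := by
  have : coveredSet R u v = ⋃ (a) (b) (_ : Subchord R u v a b), Ioo a b := by
    ext x
    simp only [coveredSet, mem_ofPred_eq, mem_iUnion, exists_prop]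
  rw [this]
  exact isOpen_iUnion fun a => isOpen_iUnion fun b => isOpen_iUnion fun _ => isOpen_Ioo

lemma exists_isolated_of_isClosed_of_countable {X : Type*} [MetricSpace X] [CompleteSpace X]
    {Z : Set X} (hclosed : IsClosed Z) (hcount : Z.Countable) (hne : Z.Nonempty) :
    ∃ z ∈ Z, ∃ ε > 0, ∀ x ∈ Z, dist x z < ε → x = z := by
  have not_preperfect : ¬ Preperfect Z := by
    intro hperfect
    obtain ⟨f, hf, -, hinj⟩ := Perfect.exists_nat_bool_injection ⟨hclosed, hperfect⟩ hne
    have : Countable (ℕ → Bool) :=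
      countable_univ_iff.1 <| MapsTo.countable_of_injOn (fun x _ => hf ⟨x, rfl⟩) hinj.injOn hcount
    have hle : Cardinal.mk (ℕ → Bool) ≤ Cardinal.aleph0 := Cardinal.mk_le_aleph0
    rw [← Cardinal.power_def, Cardinal.mk_bool, Cardinal.mk_nat] at hle
    exact hle.not_gt (Cardinal.cantor _)
  rw [preperfect_iff_nhds] at not_preperfect
  push Not at not_preperfect
  obtain ⟨z, hz, W, hW, hiso⟩ := not_preperfect
  obtain ⟨ε, hε, hball⟩ := Metric.mem_nhds_iff.1 hW
  exact ⟨z, hz, ε, hε, fun x hx hxz => hiso x ⟨hball hxz, hx⟩⟩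

namespace CoveredLeaf

lemma neg {u v : ℝ} (hc : CoveredLeaf R u v) (h : LiftedLam R) :
    CoveredLeaf (negRel R) (-v) (-u) where
  lt := neg_lt_neg hc.lt
  le_add_one := by linarith [hc.le_add_one]
  irrational_of_eq he := by
    obtain rfl : v = u + 1 := by linarith
    exact_mod_cast (irrational_add_intCast_iff (m := 1)).2 (hc.irrational_of_eq rfl) |>.neg
  mem_coveredSet t ht hirr := by
    simpa using neg_mem_coveredSet h (hc.mem_coveredSet (-t)
      ⟨by linarith [ht.2], by linarith [ht.1]⟩ (by simpa using hirr))

lemma subchord_trans {u v a b a' b' : ℝ} (hc : CoveredLeaf R u v) (h : LiftedLam R)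
    (hab : Subchord R u v a b) (hab' : Subchord R u v a' b') (haa' : a ≤ a') (ha'b : a' ≤ b)
    (hbb' : b ≤ b') : Subchord R u v a b' := by
  obtain ⟨hr, hua, hlt, -⟩ := hab
  obtain ⟨hr', -, -, hbv'⟩ := hab'
  refine ⟨?_, hua, hlt.trans_le hbb', hbv'⟩
  rcases haa'.eq_or_lt with rfl | haa'
  · exact hr'
  rcases ha'b.eq_or_lt with rfl | ha'b
  · exact h.trans hr hr'
  rcases hbb'.eq_or_lt with rfl | hbb'
  · exact hr
  have hwidth : b' < a + 1 := by
    by_contra! hge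
    obtain rfl : u = a := by linarith [hc.le_add_one]
    exact h.rational_left hr (hc.irrational_of_eq (by linarith [hc.le_add_one]))
  exact h.trans (h.unlinked haa' ha'b hbb' hwidth hr hr') hr'

lemma subchord_union {u v a b a' b' : ℝ} (hc : CoveredLeaf R u v) (h : LiftedLam R)
    (hab : Subchord R u v a b) (hab' : Subchord R u v a' b') (ha'b : a' ≤ b) (hab'' : a ≤ b') :
    Subchord R u v (min a a') (max b b') := by
  rcases le_total a a' with hl | hl <;> rcases le_total b b' with hr | hr <;>
    simp only [hl, hr, min_eq_left, min_eq_right, max_eq_left, max_eq_right]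
  · exact hc.subchord_trans h hab hab' hl ha'b hr
  · exact hab
  · exact hab'
  · exact hc.subchord_trans h hab' hab hl hab'' hr

lemma exists_subchord_of_Icc_subset {u v p q : ℝ} (hc : CoveredLeaf R u v) (h : LiftedLam R)
    (hpq : p ≤ q) (hcov : Icc p q ⊆ coveredSet R u v) :
    ∃ a b, Subchord R u v a b ∧ p ∈ Ioo a b ∧ q ∈ Ioo a b := by
  refine isPreconnected_Icc.induction₂
    (fun x y => ∃ a b, Subchord R u v a b ∧ x ∈ Ioo a b ∧ y ∈ Ioo a b) ?_ ?_ ?_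
    (left_mem_Icc.2 hpq) (right_mem_Icc.2 hpq)
  · intro x hx
    obtain ⟨a, b, hab, hx⟩ := hcov hx
    exact nhdsWithin_le_nhds (Filter.mem_of_superset (Ioo_mem_nhds hx.1 hx.2)
      fun y hy => ⟨a, b, hab, hx, hy⟩)
  · rintro x y z - - - ⟨a, b, hab, hx, hy⟩ ⟨a', b', hab', hy', hz⟩
    exact ⟨_, _, hc.subchord_union h hab hab' (hy'.1.trans hy.2).le (hy.1.trans hy'.2).le,
      ⟨min_lt_of_left_lt hx.1, lt_max_of_lt_left hx.2⟩,
      min_lt_of_right_lt hz.1, lt_max_of_lt_right hz.2⟩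
  · rintro x y - - ⟨a, b, hab, hx, hy⟩
    exact ⟨a, b, hab, hy, hx⟩

lemma rel_or_limitLeaf_sInf {u v y z : ℝ} (hc : CoveredLeaf R u v) (h : LiftedLam R) (hyz : y < z)
    (hz : z ∉ coveredSet R u v) (hcov : Ico y z ⊆ coveredSet R u v) :
    let α := sInf {a | ∃ b, Subchord R u v a b ∧ y ∈ Ioo a b}
    R α z ∨ LimitLeaf R α z := by
  intro α
  have hbdd : BddBelow {a | ∃ b, Subchord R u v a b ∧ y ∈ Ioo a b} :=
    ⟨u, fun a ⟨b, hab, _⟩ => hab.2.1⟩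
  have hne : {a | ∃ b, Subchord R u v a b ∧ y ∈ Ioo a b}.Nonempty := hcov ⟨le_rfl, hyz⟩
  refine h.rel_or_limitLeaf fun ε hε => ?_
  obtain ⟨a, ⟨b, hab, hy⟩, haα⟩ := exists_lt_of_csInf_lt hne (lt_add_of_pos_right α hε)
  obtain ⟨x, hx, hxz⟩ := exists_between (max_lt hyz (sub_lt_self z hε))
  obtain ⟨hyx, hεx⟩ := max_lt_iff.1 hx
  obtain ⟨a', b', hab', hy', hx'⟩ := hc.exists_subchord_of_Icc_subset h hyx.le
    fun w hw => hcov ⟨hw.1, hw.2.trans_lt hxz⟩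
  have hunion := hc.subchord_union h hab hab' (hy'.1.trans hy.2).le (hy.1.trans hy'.2).le
  have hmin : min a a' < y := min_lt_of_left_lt hy.1
  refine ⟨_, _, hunion.1, ⟨csInf_le hbdd ⟨_, hunion, hmin, lt_max_of_lt_left hy.2⟩,
    min_lt_of_left_lt haα⟩, hεx.trans (lt_max_of_lt_right hx'.2), ?_⟩
  by_contra! hzb
  exact hz ⟨_, _, hunion, hmin.trans hyz, hzb⟩

lemma exists_subchord_left {u v y z : ℝ} (hc : CoveredLeaf R u v) (h : InvLiftedLam d R)
    (hyz : y < z) (huz : u < z) (hzv : z < v) (hz : z ∉ coveredSet R u v)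
    (hcov : Ico y z ⊆ coveredSet R u v) : ∃ α, Subchord R u v α z := by
  have rational_z : ¬ Irrational z := fun hi => hz (hc.mem_coveredSet z ⟨huz, hzv⟩ hi)
  obtain ⟨a, b, hab, hya⟩ := hcov (left_mem_Ico.2 hyz)
  have hbdd : u ∈ lowerBounds {a | ∃ b, Subchord R u v a b ∧ y ∈ Ioo a b} :=
    fun a ⟨b, hab, _⟩ => hab.2.1
  refine ⟨sInf {a | ∃ b, Subchord R u v a b ∧ y ∈ Ioo a b}, ?_, le_csInf ⟨a, b, hab, hya⟩ hbdd,
    (csInf_le ⟨u, hbdd⟩ ⟨b, hab, hya⟩).trans_lt (hya.1.trans hyz), hzv.le⟩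
  rcases hc.rel_or_limitLeaf_sInf h.toLiftedLam hyz hz hcov with hr | hl
  · exact hr
  · exact h.rel_of_limitLeaf hl (h.limitLeaf_left_rational hl rational_z) rational_z

lemma exists_subchord_right {u v y z : ℝ} (hc : CoveredLeaf R u v) (h : InvLiftedLam d R)
    (hzy : z < y) (huz : u < z) (hzv : z < v) (hz : z ∉ coveredSet R u v)
    (hcov : Ioc z y ⊆ coveredSet R u v) : ∃ β, Subchord R u v z β := by
  obtain ⟨α, hα⟩ := (hc.neg h.toLiftedLam).exists_subchord_left h.neg (neg_lt_neg hzy)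
    (neg_lt_neg hzv) (neg_lt_neg huz)
    (fun hmem => hz (by
      simpa only [neg_neg, negRel_negRel] using neg_mem_coveredSet h.toLiftedLam.neg hmem))
    (fun x hx => by
      simpa only [neg_neg] using neg_mem_coveredSet h.toLiftedLam
        (hcov (show -x ∈ Ioc z y from ⟨by linarith [hx.2], by linarith [hx.1]⟩)))
  exact ⟨-α, by simpa only [neg_neg, negRel_negRel] using hα.neg h.toLiftedLam.neg⟩

lemma mem_coveredSet_of_isolated {u v z ε : ℝ} (hc : CoveredLeaf R u v) (h : InvLiftedLam d R)
    (hε : 0 < ε) (hz : z ∈ Ioo u v) (hiso : ∀ x, x ≠ z → dist x z < ε → x ∈ coveredSet R u v) :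
    z ∈ coveredSet R u v := by
  by_contra hmem
  obtain ⟨α, hα⟩ := hc.exists_subchord_left h (y := z - ε / 2) (by linarith) hz.1 hz.2 hmem
    fun x hx => hiso x hx.2.ne (abs_lt.2 ⟨by linarith [hx.1], by linarith [hx.2]⟩)
  obtain ⟨β, hβ⟩ := hc.exists_subchord_right h (y := z + ε / 2) (by linarith) hz.1 hz.2 hmem
    fun x hx => hiso x hx.1.ne' (abs_lt.2 ⟨by linarith [hx.1], by linarith [hx.2]⟩)
  obtain ⟨hrα, huα, hαz, -⟩ := hα
  obtain ⟨hrβ, -, hzβ, hβv⟩ := hβ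
  exact hmem ⟨α, β, ⟨h.trans hrα hrβ, huα, hαz.trans hzβ, hβv⟩, hαz, hzβ⟩

/-- The uncovered points of `[t, t']` form a closed set of rationals, so if there were any, one of
them would be isolated. -/
lemma Icc_subset_coveredSet {u v t t' : ℝ} (hc : CoveredLeaf R u v) (h : InvLiftedLam d R)
    (ht : Irrational t) (ht' : Irrational t') (hut : u < t) (htv' : t' < v) :
    Icc t t' ⊆ coveredSet R u v := by
  by_contra hsub
  have irrational_covered : ∀ x ∈ Icc t t', Irrational x → x ∈ coveredSet R u v :=
    fun x hx => hc.mem_coveredSet x ⟨hut.trans_le hx.1, hx.2.trans_lt htv'⟩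
  have hcount : (Icc t t' \ coveredSet R u v).Countable :=
    (countable_range ((↑) : ℚ → ℝ)).mono fun x hx =>
      not_not.1 fun hirr => hx.2 (irrational_covered x hx.1 hirr)
  obtain ⟨z, ⟨hz, hzcov⟩, ε, hε, hiso⟩ := exists_isolated_of_isClosed_of_countable
    (isClosed_Icc.sdiff (isOpen_coveredSet u v)) hcount (sdiff_nonempty.2 hsub)
  have htz : t < z := hz.1.lt_of_ne fun he =>
    hzcov (irrational_covered z hz (he ▸ ht))
  have hzt' : z < t' := hz.2.lt_of_ne fun he =>
    hzcov (irrational_covered z hz (he ▸ ht'))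
  refine hzcov (hc.mem_coveredSet_of_isolated h (ε := min ε (min (z - t) (t' - z)))
    (by simp [*]) ⟨hut.trans htz, hzt'.trans htv'⟩ fun x hxz hdist => ?_)
  simp only [lt_min_iff, Real.dist_eq] at hdist
  obtain ⟨hxε, hxt, hxt'⟩ := hdist
  by_contra hx
  exact hxz (hiso x ⟨⟨by linarith [(abs_lt.1 hxt).1], by linarith [(abs_lt.1 hxt').2]⟩, hx⟩ hxε)

lemma rel_or_limitLeaf {u v : ℝ} (hc : CoveredLeaf R u v) (h : InvLiftedLam d R) :
    R u v ∨ LimitLeaf R u v := by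
  refine h.toLiftedLam.rel_or_limitLeaf fun ε hε => ?_
  have hlt := hc.lt
  obtain ⟨t, ht, hut, htu⟩ := exists_irrational_btwn
    (show u < min (u + ε) ((u + v) / 2) from lt_min (by linarith) (by linarith))
  obtain ⟨t', ht', hvt', htv'⟩ := exists_irrational_btwn
    (show max (v - ε) ((u + v) / 2) < v from max_lt (by linarith) (by linarith))
  rw [lt_min_iff] at htu
  rw [max_lt_iff] at hvt'
  obtain ⟨a, b, hab, hat, hbt'⟩ := hc.exists_subchord_of_Icc_subset h.toLiftedLam (by linarith)
    (hc.Icc_subset_coveredSet h ht ht' hut htv')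
  exact ⟨a, b, hab.1, ⟨hab.2.1, hat.1.trans htu.1⟩, hvt'.1.trans hbt'.2, hab.2.2.2⟩

end CoveredLeaf

/-- The interval `(u, v)` is a complementary gap of the unlinked class of `s`. -/
structure IsUnlGap (R : ℝ → ℝ → Prop) (s u v : ℝ) : Prop where
  lt : u < v
  le_add_one : v ≤ u + 1
  left_mem : u ∈ closure (unlClass R s)
  right_mem : v ∈ closure (unlClass R s)
  disjoint : Disjoint (Ioo u v) (unlClass R s)

namespace InvLiftedLam

lemma coveredLeaf_of_isUnlGap (h : InvLiftedLam d R) {s u v : ℝ} (hs : Irrational s)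
    (hgap : IsUnlGap R s u v) (hirr : v = u + 1 → Irrational u) : CoveredLeaf R u v := by
  refine ⟨hgap.lt, hgap.le_add_one, hirr, fun t ht hti => ?_⟩
  obtain ⟨a, b, hr, htab, hdisj⟩ := h.exists_chord_disjoint_unlClass hs hti
    fun hst => hgap.disjoint.notMem_of_mem_left ht ⟨hti, hst⟩
  have hfree := hdisj.closure_right isOpen_Ioo
  refine ⟨a, b, ⟨hr, ?_, htab.1.trans htab.2, ?_⟩, htab⟩ <;> by_contra! hc
  · exact hfree.notMem_of_mem_left ⟨hc, ht.1.trans htab.2⟩ hgap.left_mem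
  · exact hfree.notMem_of_mem_left ⟨htab.1.trans ht.2, hc⟩ hgap.right_mem

lemma rel_or_limitLeaf_of_isUnlGap (h : InvLiftedLam d R) {s u v : ℝ} (hs : Irrational s)
    (hgap : IsUnlGap R s u v) (hirr : v = u + 1 → Irrational u) : R u v ∨ LimitLeaf R u v :=
  (h.coveredLeaf_of_isUnlGap hs hgap hirr).rel_or_limitLeaf h

end InvLiftedLam

/-! ### Images of infinite unlinked classes -/

lemma exists_forall_pos_of_finite {ι : Type*} {K : Set ι} (hK : K.Finite) {P : ι → ℝ → Prop}
    (hmono : ∀ k, Monotone (P k)) (hex : ∀ ε > 0, ∃ k ∈ K, P k ε) : ∃ k ∈ K, ∀ ε > 0, P k ε := by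
  by_contra! hc
  choose! ε hε hP using hc
  obtain ⟨k₀, hk₀, -⟩ := hex 1 one_pos
  obtain ⟨m, hm, hmin⟩ := exists_min_image K ε hK ⟨k₀, hk₀⟩
  obtain ⟨k, hk, hPk⟩ := hex (ε m) (hε m hm)
  exact hP k hk (hmono k (hmin k hk) hPk)

lemma exists_infinite_subset_floor_eq {α κ : Type*} [Finite κ] {I : Set α} (hI : I.Infinite)
    {f : κ → α → ℝ} {c : ℝ} (hf : ∀ k, ∀ n ∈ I, f k n ∈ Ico 0 c) :
    ∃ J ⊆ I, J.Infinite ∧ ∀ k, ∀ n ∈ J, ∀ m ∈ J, ⌊f k n⌋ = ⌊f k m⌋ := by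
  by_contra! hc
  refine hI (Finite.of_finite_fibers (fun n k => ⌊f k n⌋) ?_ fun y _ => ?_)
  · refine (Finite.pi' fun _ : κ => finite_Icc (0 : ℤ) ⌈c⌉).subset ?_
    rintro _ ⟨n, hn, rfl⟩ k
    exact ⟨Int.floor_nonneg.2 (hf k n hn).1,
      Int.cast_le.1 ((Int.floor_le _).trans ((hf k n hn).2.le.trans (Int.le_ceil c)))⟩
  · by_contra hinf
    obtain ⟨k, n, hn, m, hm, hne⟩ := hc (I ∩ (fun n k => ⌊f k n⌋) ⁻¹' {y}) inter_subset_left hinf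
    exact hne (congrFun (hn.2.trans hm.2.symm) k)

/-- Expansion by `d` modulo `1` cannot go on without a carry. -/
lemma exists_ge_one_le_mul_of_expanding (hd : 2 ≤ d) {w : ℕ → ℝ} (hw : ∀ n, w n ∈ Ioc 0 1)
    (hstep : ∀ n, ∃ k : ℤ, w (n + 1) = d * w n + k) (N : ℕ) : ∃ n ≥ N, 1 ≤ d * w n := by
  by_contra! hsmall
  have hd' : (1 : ℝ) < d := by exact_mod_cast hd
  have no_carry (n : ℕ) (hn : N ≤ n) : w (n + 1) = d * w n := by
    obtain ⟨k, hk⟩ := hstep n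
    have hpos : 0 < d * w n := mul_pos (by linarith) (hw n).1
    have hlt : (k : ℝ) < 1 := by linarith [(hw (n + 1)).2]
    have hgt : (-1 : ℝ) < k := by linarith [(hw (n + 1)).1, hsmall n hn]
    norm_cast at hlt hgt
    obtain rfl : k = 0 := by omega
    simpa using hk
  have growth (j : ℕ) : w (N + j) = d ^ j * w N := by
    induction j with
    | zero => simp
    | succ j ih => rw [← add_assoc, no_carry _ (by omega), ih, pow_succ', mul_assoc]
  obtain ⟨j, hj⟩ := pow_unbounded_of_one_lt (1 / w N) hd'
  rw [div_lt_iff₀ (hw N).1, ← growth] at hj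
  linarith [(hw (N + j)).2]

lemma unlEquiv_fract (s : ℝ) : UnlEquiv R s (Int.fract s) := by
  simpa [Int.fract, sub_eq_add_neg] using UnlEquiv.self_add_int (R := R) s (-⌊s⌋)

lemma irrational_fract {s : ℝ} : Irrational (Int.fract s) ↔ Irrational s :=
  irrational_sub_intCast_iff

/-- The unlinked class of `s` projects to a finite subset of the circle. -/
def FiniteUnlClass (R : ℝ → ℝ → Prop) (s : ℝ) : Prop := ∀ a b, (unlClass R s ∩ Icc a b).Finite

lemma FiniteUnlClass.congr {s t : ℝ} (hst : UnlEquiv R s t) (hs : FiniteUnlClass R s) :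
    FiniteUnlClass R t :=
  fun a b => (hs a b).subset fun _ hx => ⟨⟨hx.1.1, hst.trans hx.1.2⟩, hx.2⟩

namespace InvLiftedLam

lemma unlEquiv_mul_of_mul_sub_lt_one (h : InvLiftedLam d R) {x y : ℝ} (hx : Irrational x)
    (hy : Irrational y) (hxy : UnlEquiv R x y) (hlt : x < y) (hclose : d * (y - x) < 1) :
    UnlEquiv R (d * x) (d * y) := by
  have hd := h.cast_pos
  by_contra hsep
  obtain ⟨e, f, hr, he, hf⟩ := h.exists_separating_chord (h.irrational_mul.2 hx)
    (h.irrational_mul.2 hy) (mul_lt_mul_of_pos_left hlt hd) (by linarith) hsep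
  have he' : d * (e / d) = e := mul_div_cancel₀ e hd.ne'
  rw [← he'] at hr he
  obtain ⟨g, k, hr', hg, hxg, hgx⟩ := h.exists_preimage_mem_Ico hr x
  have hxe : x < e / d := lt_of_mul_lt_mul_left he.1 hd.le
  have hey : e / d < y := lt_of_mul_lt_mul_left he.2 hd.le
  have hgy := hxy.lt_of_rel h.toLiftedLam hy hr' hxe hey hgx
  have hmul := mul_lt_mul_of_pos_left hgy hd
  have hmul' := mul_le_mul_of_nonneg_left hxg hd.le
  rw [mul_sub] at hclose
  have hneg : (k : ℝ) < 0 := by linarith [hf.1]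
  have hgt : (-1 : ℝ) < k := by linarith [hf.2]
  norm_cast at hneg hgt
  omega

lemma limitLeaf_not_unlEquiv_left (h : InvLiftedLam d R) {z w t : ℝ} (hl : LimitLeaf R z w)
    (hz : Irrational z) (hwz : w ≤ z + 1) (ht : t ∈ Ioo z w) : ¬ UnlEquiv R z t := by
  have hw : Irrational w := not_not.1 fun hw => h.limitLeaf_left_rational hl hw hz
  exact fun hzt => hl.not_unlEquiv hwz ht <|
    (h.unlEquiv_of_limitLeaf hl hz hw (ht.1.trans ht.2) hwz).symm.trans hzt

lemma exists_limitLeaf_fract_pow_mul (h : InvLiftedLam d R) {u v : ℝ} (hl : LimitLeaf R u v) :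
    ∃ w : ℕ → ℝ, (∀ n, w n ∈ Ioc 0 1) ∧ (∀ n, ∃ k : ℤ, w (n + 1) = d * w n + k) ∧
      ∀ n, LimitLeaf R (Int.fract (d ^ n * u)) (Int.fract (d ^ n * u) + w n) := by
  have hdiv (n : ℕ) : toIocMod one_pos 0 (d ^ n * (v - u)) =
      d ^ n * (v - u) - toIocDiv one_pos 0 (d ^ n * (v - u)) := by
    rw [← self_sub_toIocDiv_zsmul, zsmul_one]
  refine ⟨fun n => toIocMod one_pos 0 (d ^ n * (v - u)), fun n => ?_, fun n => ?_, fun n => ?_⟩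
  · simpa using toIocMod_mem_Ioc one_pos 0 ((d : ℝ) ^ n * (v - u))
  · refine ⟨d * toIocDiv one_pos 0 ((d : ℝ) ^ n * (v - u)) -
      toIocDiv one_pos 0 ((d : ℝ) ^ (n + 1) * (v - u)), ?_⟩
    simp only [hdiv]
    push_cast
    ring
  · have hshift := h.add_int_limitLeaf (h.limitLeaf_pow_mul hl n) (-⌊d ^ n * u⌋)
      (-⌊d ^ n * u⌋ - toIocDiv one_pos 0 (d ^ n * (v - u)))
    convert hshift using 1
    · rw [Int.fract]; push_cast; ring
    · simp only [hdiv, Int.fract]; push_cast; ring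

/-- Infinitely many image leaves have length at least `1 / d`, and the class of the left end of such
a leaf does not meet its interior. -/
lemma exists_not_unlEquiv_pow_mul_of_limitLeaf (h : InvLiftedLam d R) {u v : ℝ}
    (hl : LimitLeaf R u v) (hu : Irrational u) {T : Set ℕ} (hT : T.Finite) :
    ∃ n, ∀ m ∈ T, ¬ UnlEquiv R (d ^ n * u) (d ^ m * u) := by
  by_contra! hrep
  choose m hmT hm using hrep
  obtain ⟨w, hw, hstep, hleaf⟩ := h.exists_limitLeaf_fract_pow_mul hl
  have hd := h.cast_pos
  have hlong : {n | 1 ≤ d * w n}.Infinite := infinite_of_forall_exists_gt fun N => by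
    obtain ⟨n, hn, hwn⟩ := exists_ge_one_le_mul_of_expanding h.two_le hw hstep (N + 1)
    exact ⟨n, hwn, hn⟩
  obtain ⟨i, hi, j, hj, hij, heq⟩ := hlong.exists_ne_map_eq_of_mapsTo
    (f := fun n => (m n, ⌊d * Int.fract (d ^ n * u)⌋)) (t := T ×ˢ Icc 0 (d : ℤ))
    (fun n _ => ⟨hmT n, Int.floor_nonneg.2 (by positivity), Int.floor_le_iff.2 (by
      push_cast; nlinarith [Int.fract_lt_one ((d : ℝ) ^ n * u)])⟩) (hT.prod (finite_Icc _ _))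
  obtain ⟨hmij, hfloor⟩ := Prod.mk.inj heq
  have hclose := abs_lt.1 (Int.abs_sub_lt_one_of_floor_eq_floor hfloor)
  have hequiv : UnlEquiv R (Int.fract (d ^ i * u)) (Int.fract (d ^ j * u)) :=
    (unlEquiv_fract _).symm.trans <| (hm i).trans <| (hmij ▸ (hm j).symm).trans (unlEquiv_fract _)
  have fract_le {i j : ℕ} (hwi : 1 ≤ d * w i)
      (hclose : d * Int.fract (d ^ j * u) < d * Int.fract (d ^ i * u) + 1)
      (hequiv : UnlEquiv R (Int.fract (d ^ i * u)) (Int.fract (d ^ j * u))) :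
      Int.fract (d ^ j * u) ≤ Int.fract (d ^ i * u) := not_lt.1 fun hlt =>
    h.limitLeaf_not_unlEquiv_left (hleaf i) (irrational_fract.2 (h.irrational_pow_mul hu i))
      (by linarith [(hw i).2]) ⟨hlt, by nlinarith⟩ hequiv
  have hfract := le_antisymm (fract_le hj (by linarith) hequiv.symm)
    (fract_le hi (by linarith) hequiv)
  obtain ⟨k, hk⟩ := Int.fract_eq_fract.1 hfract
  exact pow_mul_ne_pow_mul_add_int h.two_le hu hij k (by linarith)

/-- Finitely many inverse branches are available, so one of them lifts inner chords arbitrarily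
close to the leaf. -/
lemma exists_limitLeaf_lift (h : InvLiftedLam d R) {p θ : ℝ} (hl : LimitLeaf R p (d * θ)) :
    ∃ z, (∃ l : ℤ, d * z = p + l) ∧ z < θ ∧ θ ≤ z + 1 ∧ LimitLeaf R z θ := by
  have hd := h.cast_pos
  have hdiv (x : ℝ) : d * (x / d) = x := mul_div_cancel₀ x hd.ne'
  let branchLifts (k : ℤ) (ε : ℝ) : Prop :=
    ∃ a b, R a b ∧ a ∈ Ico (θ - 1) θ ∧ b ∈ Ioo (θ - ε) θ ∧ a ∈ Ioo ((p + k) / d) ((p + k) / d + ε)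
  have hbranch : ∃ k ∈ Icc ⌊d * (θ - 2) - p⌋ ⌈d * θ - p⌉, ∀ ε > 0, branchLifts k ε := by
    refine exists_forall_pos_of_finite (finite_Icc _ _) ?_ ?_
    · rintro k ε ε' hε ⟨a, b, hr, ha, hb, ha'⟩
      exact ⟨a, b, hr, ha, ⟨by linarith [hb.1], hb.2⟩, ha'.1, by linarith [ha'.2]⟩
    · intro ε hε
      obtain ⟨a, b, hr, ha, hb⟩ := hl.exists_chord (u' := p + d * min ε 1) (v' := d * (θ - ε))
        (by simp [hd, hε]) (by nlinarith)
      rw [← hdiv b] at hr hb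
      obtain ⟨y, k, hby, hy, hyθ⟩ := h.exists_preimage_mem_Ico (h.symm hr) (θ - 1)
      have hbranch_lt : (p + k) / d < y := by rw [div_lt_iff₀' hd]; linarith [ha.1]
      have hy_lt : y < (p + k) / d + ε := by
        rw [← sub_lt_iff_lt_add, lt_div_iff₀' hd]; nlinarith [ha.2, min_le_left ε 1]
      rw [sub_add_cancel] at hyθ
      refine ⟨k, ⟨?_, ?_⟩, y, b / d, h.symm hby, hyθ, ⟨?_, ?_⟩, hbranch_lt, hy_lt⟩
      · rw [Int.floor_le_iff]
        nlinarith [ha.2, hyθ.1, min_le_right ε 1]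
      · rw [Int.le_ceil_iff]
        nlinarith [ha.1, hyθ.2]
      · exact lt_of_mul_lt_mul_left hb.1 hd.le
      · exact lt_of_mul_lt_mul_left hb.2 hd.le
  obtain ⟨k, -, hk⟩ := hbranch
  refine ⟨(p + k) / d, ⟨k, hdiv _⟩, ?_, ?_, fun ε hε => ?_⟩
  · obtain ⟨a, b, -, ha, -, ha'⟩ := hk 1 one_pos
    exact ha'.1.trans ha.2
  · refine le_of_forall_pos_lt_add fun ε hε => ?_
    obtain ⟨a, b, -, ha, -, ha'⟩ := hk ε hε
    linarith [ha.1, ha'.2]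
  · obtain ⟨a, b, hr, -, hb, ha'⟩ := hk ε hε
    exact ⟨a, b, hr, ha', hb⟩

lemma exists_limitLeaf_left_of_finiteUnlClass (h : InvLiftedLam d R) {q : ℝ} (hq : Irrational q)
    (hfin : FiniteUnlClass R q) : ∃ p ∈ unlClass R q, LimitLeaf R p q := by
  have hmem : q - 1 ∈ unlClass R q ∩ Ico (q - 1) q := by
    refine ⟨?_, by simp⟩
    simpa [sub_eq_add_neg] using add_int_mem_unlClass (mem_unlClass_self (R := R) hq) (-1)
  obtain ⟨p, ⟨hp, hpq⟩, hmax⟩ := exists_max_image (unlClass R q ∩ Ico (q - 1) q) id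
    ((hfin (q - 1) q).subset (inter_subset_inter_right _ Ico_subset_Icc_self)) ⟨_, hmem⟩
  have hgap : IsUnlGap R q p q :=
    { lt := hpq.2
      le_add_one := by linarith [hpq.1]
      left_mem := subset_closure hp
      right_mem := subset_closure (mem_unlClass_self hq)
      disjoint := disjoint_left.2 fun x hx hxq =>
        (hmax x ⟨hxq, by linarith [hx.1, hpq.1], hx.2⟩).not_gt hx.1 }
  exact ⟨p, hp, (h.rel_or_limitLeaf_of_isUnlGap hq hgap fun _ => hp.1).resolve_left
    fun hr => h.rational_left hr hp.1⟩

end InvLiftedLam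

/-- The points of the unlinked class of `θ` whose images are unlinked-equivalent to `d θ`. -/
def unsplitClass (d : ℕ) (R : ℝ → ℝ → Prop) (θ : ℝ) : Set ℝ :=
  {t ∈ unlClass R θ | UnlEquiv R (d * θ) (d * t)}

namespace InvLiftedLam

lemma add_int_mem_unsplitClass {θ : ℝ} (hθ : Irrational θ) (k : ℤ) :
    θ + k ∈ unsplitClass d R θ := by
  refine ⟨add_int_mem_unlClass (mem_unlClass_self hθ) k, ?_⟩
  have := UnlEquiv.self_add_int (R := R) (d * θ) (d * k)
  push_cast at this
  rwa [mul_add]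

lemma finite_unsplitClass_inter_Icc (h : InvLiftedLam d R) {θ : ℝ}
    (hfin : FiniteUnlClass R (d * θ)) (a b : ℝ) : (unsplitClass d R θ ∩ Icc a b).Finite := by
  have hd := h.cast_pos
  refine ((hfin (d * a) (d * b)).preimage (mul_right_injective₀ hd.ne').injOn).subset ?_
  rintro t ⟨⟨ht, hdt⟩, hat, htb⟩
  exact ⟨⟨h.irrational_mul.2 ht.1, hdt⟩, mul_le_mul_of_nonneg_left hat hd.le,
    mul_le_mul_of_nonneg_left htb hd.le⟩

lemma exists_unsplitClass_predecessor (h : InvLiftedLam d R) {θ t : ℝ}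
    (hfin : FiniteUnlClass R (d * θ)) (ht : t ∈ unsplitClass d R θ) :
    ∃ z ∈ unsplitClass d R θ, z < t ∧ ∀ x ∈ Ioo z t, x ∉ unlClass R θ := by
  obtain ⟨⟨hti, hθt⟩, hdt⟩ := ht
  obtain ⟨p, hp, hpt⟩ := h.exists_limitLeaf_left_of_finiteUnlClass (h.irrational_mul.2 hti)
    (hfin.congr hdt)
  obtain ⟨z, ⟨l, hl⟩, hzt, htz, hleaf⟩ := h.exists_limitLeaf_lift hpt
  have hz : Irrational z := by rw [← h.irrational_mul, hl, irrational_add_intCast_iff]; exact hp.1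
  refine ⟨z, ⟨⟨hz, hθt.trans (h.unlEquiv_of_limitLeaf hleaf hz hti hzt htz).symm⟩, ?_⟩, hzt,
    fun x hx hxθ => hleaf.not_unlEquiv htz hx (hθt.symm.trans hxθ.2)⟩
  rw [hl]
  exact (hdt.trans hp.2).add_int_right l

lemma unlClass_subset_unsplitClass (h : InvLiftedLam d R) {θ : ℝ} (hθ : Irrational θ)
    (hfin : FiniteUnlClass R (d * θ)) : unlClass R θ ⊆ unsplitClass d R θ := by
  intro t ht
  by_contra hsplit
  obtain ⟨k, hk⟩ := exists_int_add_mem_Ico θ (t + 1)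
  obtain ⟨m, ⟨hm, htm⟩, hmin⟩ := exists_min_image (unsplitClass d R θ ∩ Ioc t (t + 2)) id
    ((h.finite_unsplitClass_inter_Icc hfin t (t + 2)).subset
      (inter_subset_inter_right _ Ioc_subset_Icc_self))
    ⟨θ + k, add_int_mem_unsplitClass hθ k, by linarith [hk.1], by linarith [hk.2]⟩
  obtain ⟨z, hz, hzm, hfree⟩ := h.exists_unsplitClass_predecessor hfin hm
  rcases lt_trichotomy z t with hzt | rfl | htz
  · exact hfree t ⟨hzt, htm.1⟩ ht
  · exact hsplit hz
  · exact (hmin z ⟨hz, htz, by linarith [htm.2]⟩).not_gt hzm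

lemma finiteUnlClass_of_mul (h : InvLiftedLam d R) {θ : ℝ} (hθ : Irrational θ)
    (hfin : FiniteUnlClass R (d * θ)) : FiniteUnlClass R θ := fun a b =>
  (h.finite_unsplitClass_inter_Icc hfin a b).subset <|
    inter_subset_inter_left _ (h.unlClass_subset_unsplitClass hθ hfin)

lemma not_finiteUnlClass_pow_mul (h : InvLiftedLam d R) {u : ℝ} (hu : Irrational u)
    (hinf : ¬ FiniteUnlClass R u) (n : ℕ) : ¬ FiniteUnlClass R (d ^ n * u) := by
  induction n with
  | zero => simpa using hinf
  | succ n ih =>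
    rw [pow_succ', mul_assoc]
    exact mt (h.finiteUnlClass_of_mul (h.irrational_pow_mul hu n)) ih

end InvLiftedLam

/-! ### Wandering classes -/

lemma finite_of_exists_mem_Ioo {X A : Set ℝ} (hA : A.Finite)
    (hsep : ∀ x ∈ X, ∀ y ∈ X, x < y → ∃ a ∈ A, a ∈ Ioo x y) : X.Finite := by
  refine Finite.of_injOn (f := fun x => A ∩ Iio x) (t := {B | B ⊆ A})
    (fun _ _ => inter_subset_left) (fun x hx y hy hxy => ?_) hA.finite_subsets
  have not_lt {x y : ℝ} (hx : x ∈ X) (hy : y ∈ X) (hxy : A ∩ Iio x = A ∩ Iio y) : ¬ x < y := by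
    intro hlt
    obtain ⟨a, ha, hxa, hay⟩ := hsep x hx y hy hlt
    have hax : a ∈ A ∩ Iio x := hxy ▸ ⟨ha, hay⟩
    exact hxa.not_gt hax.2
  exact le_antisymm (le_of_not_gt (not_lt hy hx hxy.symm)) (le_of_not_gt (not_lt hx hy hxy))

/-- Two equivalent points with inequivalent images; these are at least `1 / d` apart on the
circle. -/
structure SplitPair (d : ℕ) (R : ℝ → ℝ → Prop) (x y : ℝ) : Prop where
  left_irrational : Irrational x
  right_irrational : Irrational y
  unlEquiv : UnlEquiv R x y
  one_le_mul_sub : 1 ≤ d * (y - x)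
  one_le_mul_add_one_sub : 1 ≤ d * (x + 1 - y)
  not_unlEquiv_mul : ¬ UnlEquiv R (d * x) (d * y)

/-- The image of the unlinked class of `s` is not contained in one unlinked class. -/
def SplitsClass (d : ℕ) (R : ℝ → ℝ → Prop) (s : ℝ) : Prop :=
  ∃ t ∈ unlClass R s, ¬ UnlEquiv R (d * s) (d * t)

lemma UnlEquiv.mul_add_int_right {s t : ℝ} (hst : UnlEquiv R s (d * t)) (k : ℤ) :
    UnlEquiv R s (d * (t + k)) := by
  have := hst.add_int_right (d * k)
  push_cast at this
  rwa [mul_add]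

lemma unlEquiv_mul_fract (s : ℝ) : UnlEquiv R (d * s) (d * Int.fract s) := by
  simpa [Int.fract, sub_eq_add_neg] using
    (UnlEquiv.refl (R := R) (d * s)).mul_add_int_right (t := s) (-⌊s⌋)

lemma SplitsClass.congr {s t : ℝ} (hs : Irrational s) (hst : UnlEquiv R s t)
    (hsplit : SplitsClass d R s) : SplitsClass d R t := by
  obtain ⟨r, hr, hne⟩ := hsplit
  by_contra! hc
  simp only [SplitsClass, not_exists, not_and, not_not] at hc
  exact hne ((hc s ⟨hs, hst.symm⟩).symm.trans (hc r ⟨hr.1, hst.symm.trans hr.2⟩))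

namespace InvLiftedLam

lemma unlEquiv_mul_of_floor_eq (h : InvLiftedLam d R) {x y : ℝ} (hx : Irrational x)
    (hy : Irrational y) (hxy : UnlEquiv R x y)
    (hfloor : ⌊d * Int.fract x⌋ = ⌊d * Int.fract y⌋) : UnlEquiv R (d * x) (d * y) := by
  have hclose := abs_lt.1 (Int.abs_sub_lt_one_of_floor_eq_floor hfloor)
  have hfract : UnlEquiv R (Int.fract x) (Int.fract y) :=
    ((unlEquiv_fract x).symm.trans hxy).trans (unlEquiv_fract y)
  suffices UnlEquiv R (d * Int.fract x) (d * Int.fract y) from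
    ((unlEquiv_mul_fract x).trans this).trans (unlEquiv_mul_fract y).symm
  rw [← irrational_fract] at hx hy
  rcases lt_trichotomy (Int.fract x) (Int.fract y) with hlt | heq | hlt
  · exact h.unlEquiv_mul_of_mul_sub_lt_one hx hy hfract hlt (by linarith)
  · rw [heq]; exact .refl _
  · exact (h.unlEquiv_mul_of_mul_sub_lt_one hy hx hfract.symm hlt (by linarith)).symm

lemma exists_splitPair_fract (h : InvLiftedLam d R) {s : ℝ} (hs : Irrational s)
    (hsplit : SplitsClass d R s) : ∃ y, SplitPair d R (Int.fract s) y := by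
  obtain ⟨t, ht, hne⟩ := hsplit
  obtain ⟨k, hxy, hyx⟩ := exists_int_add_mem_Ico t (Int.fract s)
  have hx : Irrational (Int.fract s) := irrational_fract.2 hs
  obtain ⟨hy, hequiv⟩ : t + k ∈ unlClass R (Int.fract s) :=
    ⟨irrational_add_intCast_iff.2 ht.1, ((unlEquiv_fract s).symm.trans ht.2).add_int_right k⟩
  have hne' : ¬ UnlEquiv R (d * Int.fract s) (d * (t + k)) := fun hc => hne <| by
    simpa using ((unlEquiv_mul_fract s).trans hc).mul_add_int_right (t := t + k) (-k)
  have hlt : Int.fract s < t + k := hxy.lt_of_ne fun heq => hne' (heq ▸ .refl _)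
  refine ⟨t + k, hx, hy, hequiv, le_of_not_gt fun hclose => ?_, le_of_not_gt fun hclose => ?_, hne'⟩
  · exact hne' (h.unlEquiv_mul_of_mul_sub_lt_one hx hy hequiv hlt hclose)
  · have hx1 : Irrational (Int.fract s + 1) := by
      exact_mod_cast (irrational_add_intCast_iff (m := 1)).2 hx
    have himage := h.unlEquiv_mul_of_mul_sub_lt_one hy hx1
      (by exact_mod_cast hequiv.symm.add_int_right 1) hyx hclose
    refine hne' (UnlEquiv.symm ?_)
    simpa using himage.mul_add_int_right (t := Int.fract s + 1) (-1)

end InvLiftedLam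

namespace SplitPair

lemma exists_nested_chord {x y x' y' : ℝ} (p : SplitPair d R x y) (h : InvLiftedLam d R)
    (p' : SplitPair d R x' y') (hlt : x < x') (hclose : d * (x' - x) < 1)
    (hne : ¬ UnlEquiv R x x') : ∃ a b, R a b ∧ a ∈ Ioo x x' ∧ b ∈ Ioo y' y := by
  have hd2 := h.two_le_cast
  obtain ⟨a, b, hr, ha, hb⟩ := h.exists_separating_chord p.left_irrational p'.left_irrational
    hlt (by nlinarith) hne
  have hay : a < y := by nlinarith [p.one_le_mul_sub, ha.2]
  refine ⟨a, b, hr, ha, ?_, p.unlEquiv.lt_of_rel h.toLiftedLam p.right_irrational hr ha.1 hay hb.2⟩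
  by_contra! hby
  have hby' : b < y' := hby.lt_of_ne fun heq => h.rational_right hr (heq ▸ p'.right_irrational)
  have := p'.unlEquiv.lt_of_rel h.toLiftedLam p'.right_irrational (h.swap_add_one hr) hb.1 hby'
    (by linarith [ha.2])
  nlinarith [p'.one_le_mul_add_one_sub, ha.1]

end SplitPair

lemma LiftedLam.rel_left_of_crossing (h : LiftedLam R) {a b t g : ℝ} (hab : R a b) (htg : R t g)
    (ht : t < a ∨ b < t) (hg : g ∈ Icc a b) (hbt : b < t + 1) (hta : t < a + 1) : R t a := by
  rcases hg.1.eq_or_lt with rfl | hag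
  · exact htg
  rcases hg.2.eq_or_lt with rfl | hgb
  · exact h.trans htg (h.symm hab)
  rcases ht with ht | ht
  · exact h.unlinked ht hag hgb hbt htg hab
  · exact h.trans htg (h.symm (h.unlinked hag hgb ht hta hab (h.symm htg)))

namespace InvLiftedLam

/-- Otherwise `e` would lift to a point `t` of `(x, y)` outside `[a, b]`, and the chord of `t` over
`(e, f)` could end neither in `[a, b]` nor outside `(x, y)`. -/
lemma rel_mul_of_separating_image_chord (h : InvLiftedLam d R) {x y a b e f : ℝ} {w : ℤ}
    (hxy : UnlEquiv R x y) (hy : Irrational y) (hyx : y < x + 1) (hab : R a b) (hxa : x < a)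
    (hby : b < y) (hw₀ : 0 ≤ w) (hw : w < d * (b - a)) (hef : R e f)
    (he : e ∈ Ioo (d * x) (d * y - w)) (hf : f ∈ Ioo (d * y - w) (d * x + 1)) : R e (d * a) := by
  have hd := h.cast_pos
  have hmul {p q : ℝ} (hpq : p < q) : d * p < d * q := mul_lt_mul_of_pos_left hpq hd
  have hdiv (z : ℝ) : d * (z / d) = z := mul_div_cancel₀ z hd.ne'
  have hxa' := hmul hxa
  have hby' := hmul hby
  have hw₀' : (0 : ℝ) ≤ w := by exact_mod_cast hw₀
  have hlt : a < b := by nlinarith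
  have image_chord : R (d * a) (d * b - w) := by
    simpa [sub_eq_add_neg] using h.add_int_right (h.map_mul hab) (-w)
  have lift_rel {t : ℝ} (j : ℤ) (ht : d * t = e + j) (hxt : x < t) (hty : t < y)
      (hside : t < a ∨ b < t) : R e (d * a) := by
    suffices hta : R t a by simpa [ht] using h.add_int (h.map_mul hta) (-j) 0
    obtain ⟨g, k, htg, hg, hxg, hgx⟩ := h.exists_preimage_mem_Ico
      (show R (d * t) f by simpa [ht] using h.add_int hef j 0) x
    have hgy : g < y := hxy.lt_of_rel h.toLiftedLam hy htg hxt hty hgx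
    refine h.rel_left_of_crossing hab htg hside ⟨?_, ?_⟩ (by linarith) (by linarith) <;>
      by_contra! hg_out <;> have := hmul hg_out
    · have : (-1 : ℝ) < k ∧ (k : ℝ) < 0 := by constructor <;> nlinarith [hf.1, hf.2]
      norm_cast at this
      omega
    · have : (w - 1 : ℝ) < k ∧ (k : ℝ) < w := by constructor <;> linarith [hf.1, hf.2, hmul hgy]
      norm_cast at this
      omega
  rcases lt_trichotomy e (d * a) with hea | rfl | hae
  · refine lift_rel 0 (t := e / d) (by simpa using hdiv e) ?_ ?_ (.inl ?_) <;>
      refine lt_of_mul_lt_mul_left ?_ hd.le <;> linarith [hdiv e, he.1, hmul hlt]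
  · exact h.refl (h.rational_left hef)
  rcases lt_trichotomy e (d * b - w) with heb | rfl | hbe
  · exact h.symm (h.unlinked hae heb (by linarith [hf.1]) (by linarith [hf.2]) image_chord hef)
  · exact h.symm image_chord
  · refine lift_rel w (t := (e + w) / d) (hdiv _) ?_ ?_ (.inr ?_) <;>
      refine lt_of_mul_lt_mul_left ?_ hd.le <;> linarith [hdiv (e + w), he.2, hmul hlt]

end InvLiftedLam

namespace SplitPair

lemma exists_forall_rel_mul {x y : ℝ} (p : SplitPair d R x y) (h : InvLiftedLam d R) :
    ∃ e, ∀ a b, R a b → x < a → b < y → ⌊d * (y - x)⌋ < d * (b - a) → R e (d * a) := by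
  set w := ⌊d * (y - x)⌋
  have hle : w ≤ d * (y - x) := Int.floor_le _
  have hlt : d * (y - x) < w + 1 := Int.lt_floor_add_one _
  have hne : ¬ UnlEquiv R (d * x) (d * y - w) := fun hc => p.not_unlEquiv_mul <| by
    simpa using hc.add_int_right w
  obtain ⟨e, f, hef, he, hf⟩ := h.exists_separating_chord (h.irrational_mul.2 p.left_irrational)
    (irrational_sub_intCast_iff.2 (h.irrational_mul.2 p.right_irrational))
    (lt_of_le_of_ne (by linarith) fun heq => hne (heq ▸ .refl _)) (by linarith) hne
  exact ⟨e, fun a b hab hxa hby hwab => h.rel_mul_of_separating_image_chord p.unlEquiv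
    p.right_irrational (by nlinarith [p.one_le_mul_add_one_sub]) hab hxa hby
    (Int.floor_nonneg.2 (by linarith [p.one_le_mul_sub])) hwab hef he hf⟩

end SplitPair

namespace InvLiftedLam

/-- Every `d * a` so obtained lies in one class, which is finite modulo `1`. -/
lemma finite_of_exists_forall_rel_mul (h : InvLiftedLam d R) {X : Set ℝ} (hX : X ⊆ Ico 0 1)
    {e : ℝ → ℝ} (hrel : ∀ s ∈ X, ∀ t ∈ X, s < t →
      ∃ a ∈ Ioo s t, ∀ r ∈ X, r ≤ s → R (e r) (d * a)) : X.Finite := by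
  by_contra hinf
  have hd := h.cast_pos
  obtain ⟨s₀, hs₀, t₀, ht₀, hlt₀⟩ := (Set.not_finite.1 hinf).nontrivial.exists_lt
  obtain ⟨a₀, -, ha₀⟩ := hrel s₀ hs₀ t₀ ht₀ hlt₀
  have hfin : ((fun a : ℝ => d * a) ⁻¹' {c | R (d * a₀) c ∧ c ∈ Icc 0 (d : ℝ)}).Finite :=
    (h.finite_inter_Icc _ _ _).preimage (mul_right_injective₀ hd.ne').injOn
  refine hinf (finite_of_exists_mem_Ioo hfin fun s hs t ht hst => ?_)
  obtain ⟨a, hast, ha⟩ := hrel s hs t ht hst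
  have hmin : min s s₀ ∈ X := by rcases min_choice s s₀ with heq | heq <;> rwa [heq]
  refine ⟨a, ⟨h.trans (h.symm (ha₀ _ hmin (min_le_right _ _))) (ha _ hmin (min_le_left _ _)), ?_⟩,
    hast⟩
  constructor <;> nlinarith [hast.1, hast.2, (hX hs).1, (hX ht).2]

/-- Nearby split pairs are nested, with chords between them whose images are all equivalent. -/
lemma finite_of_splitPair (h : InvLiftedLam d R) {X : Set ℝ} (hX : X ⊆ Ico 0 1) {y : ℝ → ℝ}
    (hp : ∀ x ∈ X, SplitPair d R x (y x)) (hne : X.Pairwise fun s t => ¬ UnlEquiv R s t) :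
    X.Finite := by
  by_contra hinf
  have hd := h.cast_pos
  obtain ⟨J, hJX, hJ, hfloor⟩ := exists_infinite_subset_floor_eq (κ := Bool)
    (f := fun k x => bif k then d * x else d * (y x - x)) (c := d) hinf (by
      rintro (_ | _) x hx <;> simp only [cond_true, cond_false]
      · exact ⟨by linarith [(hp x hx).one_le_mul_sub],
          by linarith [(hp x hx).one_le_mul_add_one_sub]⟩
      · exact ⟨mul_nonneg hd.le (hX hx).1, by nlinarith [(hX hx).2]⟩)
  have nested {s t : ℝ} (hs : s ∈ J) (ht : t ∈ J) (hst : s < t) :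
      ∃ a b, R a b ∧ a ∈ Ioo s t ∧ b ∈ Ioo (y t) (y s) := by
    have hclose := abs_lt.1 (Int.abs_sub_lt_one_of_floor_eq_floor (hfloor true s hs t ht))
    simp only [cond_true] at hclose
    exact (hp s (hJX hs)).exists_nested_chord h (hp t (hJX ht)) hst (by linarith)
      (hne (hJX hs) (hJX ht) hst.ne)
  choose! e he using fun x (hx : x ∈ J) => (hp x (hJX hx)).exists_forall_rel_mul h
  refine hJ (h.finite_of_exists_forall_rel_mul (hJX.trans hX) (e := e) fun s hs t ht hst => ?_)
  obtain ⟨a, b, hab, ha, hb⟩ := nested hs ht hst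
  refine ⟨a, ha, fun r hr hrs => he r hr a b hab (hrs.trans_lt ha.1) ?_ ?_⟩
  · rcases hrs.eq_or_lt with rfl | hrs
    · exact hb.2
    · obtain ⟨-, b', -, -, hb'⟩ := nested hr hs hrs
      exact hb.2.trans (hb'.1.trans hb'.2)
  · have hfloor_rt := hfloor false r hr t ht
    simp only [cond_false] at hfloor_rt
    rw [hfloor_rt]
    exact (Int.floor_le _).trans_lt (mul_lt_mul_of_pos_left (by linarith [hb.1, ha.2]) hd)

lemma finite_of_splitsClass (h : InvLiftedLam d R) {S : Set ℝ} (hirr : ∀ s ∈ S, Irrational s)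
    (hsplit : ∀ s ∈ S, SplitsClass d R s) (hS : S.Pairwise fun s t => ¬ UnlEquiv R s t) :
    S.Finite := by
  have hinequiv {s t : ℝ} (hs : s ∈ S) (ht : t ∈ S) (hst : s ≠ t) :
      ¬ UnlEquiv R (Int.fract s) (Int.fract t) := fun hc =>
    hS hs ht hst (((unlEquiv_fract s).trans hc).trans (unlEquiv_fract t).symm)
  have hpair : ∀ x ∈ Int.fract '' S, ∃ y, SplitPair d R x y := by
    rintro _ ⟨s, hs, rfl⟩
    exact h.exists_splitPair_fract (hirr s hs) (hsplit s hs)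
  choose! y hy using hpair
  refine Finite.of_finite_image (f := Int.fract) (h.finite_of_splitPair ?_ hy ?_) ?_
  · rintro _ ⟨s, -, rfl⟩
    exact ⟨Int.fract_nonneg s, Int.fract_lt_one s⟩
  · rintro _ ⟨s, hs, rfl⟩ _ ⟨t, ht, rfl⟩ hst
    exact hinequiv hs ht fun heq => hst (congrArg _ heq)
  · intro s hs t ht heq
    by_contra hst
    exact hinequiv hs ht hst (heq ▸ .refl _)

end InvLiftedLam

/-- An unlinked class all of whose images are contained in pairwise different unlinked classes. -/
structure IsWandering (d : ℕ) (R : ℝ → ℝ → Prop) (u : ℝ) : Prop where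
  irrational : Irrational u
  not_splitsClass (n : ℕ) : ¬ SplitsClass d R (d ^ n * u)
  not_unlEquiv {m n : ℕ} : m ≠ n → ¬ UnlEquiv R (d ^ m * u) (d ^ n * u)

lemma unlEquiv_mul_of_not_splitsClass {s t : ℝ} (hs : ¬ SplitsClass d R s) (ht : Irrational t)
    (hst : UnlEquiv R s t) : UnlEquiv R (d * s) (d * t) := by
  by_contra hne
  exact hs ⟨t, ⟨ht, hst⟩, hne⟩

namespace InvLiftedLam

lemma finite_splitting_times_of_image_inequivalent (h : InvLiftedLam d R) {u : ℝ}
    (hu : Irrational u) {T : Set ℕ} (hsplit : ∀ n ∈ T, SplitsClass d R (d ^ n * u))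
    (hT : T.Pairwise fun m n => ¬ UnlEquiv R (d ^ (m + 1) * u) (d ^ (n + 1) * u)) :
    T.Finite := by
  by_contra hinf
  have hd := h.cast_pos
  obtain ⟨J, hJT, hJ, hfloor⟩ := exists_infinite_subset_floor_eq (κ := Unit)
    (f := fun _ n => d * Int.fract (d ^ n * u)) (c := d) hinf fun _ n _ =>
      ⟨by positivity, by nlinarith [Int.fract_lt_one ((d : ℝ) ^ n * u)]⟩
  have inequiv {m n : ℕ} (hm : m ∈ J) (hn : n ∈ J) (hmn : m ≠ n) :
      ¬ UnlEquiv R (d ^ m * u) (d ^ n * u) := fun hequiv => by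
    refine hT (hJT hm) (hJT hn) hmn ?_
    simpa only [pow_succ', mul_assoc] using h.unlEquiv_mul_of_floor_eq
      (h.irrational_pow_mul hu m) (h.irrational_pow_mul hu n) hequiv (hfloor () m hm n hn)
  have himage : ((fun n : ℕ => (d : ℝ) ^ n * u) '' J).Finite := by
    refine h.finite_of_splitsClass ?_ ?_ ?_
    · rintro _ ⟨n, -, rfl⟩
      exact h.irrational_pow_mul hu n
    · rintro _ ⟨n, hn, rfl⟩
      exact hsplit n (hJT hn)
    · rintro _ ⟨m, hm, rfl⟩ _ ⟨n, hn, rfl⟩ hne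
      exact inequiv hm hn fun heq => hne (heq ▸ rfl)
  refine hJ (himage.of_finite_image fun m hm n hn heq => ?_)
  by_contra hmn
  exact inequiv hm hn hmn ((show (d : ℝ) ^ m * u = d ^ n * u from heq) ▸ .refl _)

lemma exists_bounded_rep_after_splitting (h : InvLiftedLam d R) {u : ℝ} (hu : Irrational u) :
    ∃ B, ∀ n, SplitsClass d R (d ^ n * u) →
      ∃ r ≤ B, UnlEquiv R (d ^ (n + 1) * u) (d ^ (r + 1) * u) := by
  let entersNewClass (n : ℕ) : Prop := ∀ m < n, SplitsClass d R (d ^ m * u) →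
    ¬ UnlEquiv R (d ^ (m + 1) * u) (d ^ (n + 1) * u)
  have hfin : {n | SplitsClass d R (d ^ n * u) ∧ entersNewClass n}.Finite := by
    refine h.finite_splitting_times_of_image_inequivalent hu (fun n hn => hn.1) ?_
    intro m hm n hn hne hequiv
    rcases hne.lt_or_gt with hlt | hlt
    · exact hn.2 m hlt hm.1 hequiv
    · exact hm.2 n hlt hn.1 hequiv.symm
  obtain ⟨B, hB⟩ := hfin.bddAbove
  refine ⟨B, fun n hn => ?_⟩
  induction n using Nat.strong_induction_on with
  | _ n ih =>
    by_cases hnew : entersNewClass n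
    · exact ⟨n, hB ⟨hn, hnew⟩, .refl _⟩
    · simp only [entersNewClass, not_forall, not_not] at hnew
      obtain ⟨m, hmn, hm, hequiv⟩ := hnew
      obtain ⟨r, hr, hmr⟩ := ih m hmn hm
      exact ⟨r, hr, hequiv.symm.trans hmr⟩

/-- If `K` is a splitting time after those representing all classes entered by splitting, then each
class of the orbit is visited up to time `K`. -/
lemma finite_splitting_times (h : InvLiftedLam d R) {u v : ℝ} (hl : LimitLeaf R u v)
    (hu : Irrational u) : {n : ℕ | SplitsClass d R (d ^ n * u)}.Finite := by
  by_contra hinf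
  obtain ⟨B, hB⟩ := h.exists_bounded_rep_after_splitting hu
  obtain ⟨K, hK, hBK⟩ := (Set.not_finite.1 hinf).exists_gt B
  have hvisit (n : ℕ) : ∃ m ∈ Iic K, UnlEquiv R (d ^ n * u) (d ^ m * u) := by
    induction n with
    | zero => exact ⟨0, Nat.zero_le K, .refl _⟩
    | succ n ih =>
      by_cases hn : SplitsClass d R (d ^ n * u)
      · obtain ⟨r, hr, hequiv⟩ := hB n hn
        exact ⟨r + 1, Nat.succ_le_of_lt (hr.trans_lt hBK), hequiv⟩
      · obtain ⟨m, hm, hequiv⟩ := ih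
        have hmK : m ≠ K := fun heq =>
          hn ((heq ▸ hK : SplitsClass d R _).congr (h.irrational_pow_mul hu m) hequiv.symm)
        refine ⟨m + 1, lt_of_le_of_ne hm hmK, ?_⟩
        simpa only [pow_succ', mul_assoc] using
          unlEquiv_mul_of_not_splitsClass hn (h.irrational_pow_mul hu m) hequiv
  obtain ⟨n, hn⟩ := h.exists_not_unlEquiv_pow_mul_of_limitLeaf hl hu (finite_Iic K)
  obtain ⟨m, hm, hequiv⟩ := hvisit n
  exact hn m hm hequiv

lemma not_unlEquiv_of_not_splitsClass (h : InvLiftedLam d R) {u v : ℝ} (hl : LimitLeaf R u v)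
    (hu : Irrational u) {N : ℕ} (hN : ∀ n ≥ N, ¬ SplitsClass d R (d ^ n * u)) {i j : ℕ}
    (hi : N ≤ i) (hij : i < j) : ¬ UnlEquiv R (d ^ i * u) (d ^ j * u) := by
  intro hequiv
  have hperiodic (k : ℕ) : UnlEquiv R (d ^ (i + k) * u) (d ^ (j + k) * u) := by
    induction k with
    | zero => simpa using hequiv
    | succ k ih =>
      simpa only [← add_assoc, pow_succ', mul_assoc] using
        unlEquiv_mul_of_not_splitsClass (hN (i + k) (by omega)) (h.irrational_pow_mul hu _) ih
  have hvisit (n : ℕ) : ∃ m ∈ Iio j, UnlEquiv R (d ^ n * u) (d ^ m * u) := by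
    induction n using Nat.strong_induction_on with
    | _ n ih =>
      rcases lt_or_ge n j with hn | hn
      · exact ⟨n, hn, .refl _⟩
      · obtain ⟨k, rfl⟩ := Nat.exists_eq_add_of_le hn
        obtain ⟨m, hm, hequiv⟩ := ih (i + k) (by omega)
        exact ⟨m, hm, (hperiodic k).symm.trans hequiv⟩
  obtain ⟨n, hn⟩ := h.exists_not_unlEquiv_pow_mul_of_limitLeaf hl hu (finite_Iio j)
  obtain ⟨m, hm, hequiv⟩ := hvisit n
  exact hn m hm hequiv

lemma exists_isWandering_pow_mul (h : InvLiftedLam d R) {u v : ℝ} (hl : LimitLeaf R u v)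
    (hu : Irrational u) : ∃ N : ℕ, IsWandering d R (d ^ N * u) := by
  obtain ⟨B, hB⟩ := (h.finite_splitting_times hl hu).bddAbove
  have hN : ∀ n ≥ B + 1, ¬ SplitsClass d R (d ^ n * u) := fun n hn hsplit => by
    have : n ≤ B := hB hsplit
    omega
  refine ⟨B + 1, h.irrational_pow_mul hu _, fun n => ?_, fun {m n} hmn hequiv => ?_⟩
  · rw [← mul_assoc, ← pow_add]
    exact hN _ (by omega)
  · simp only [← mul_assoc, ← pow_add] at hequiv
    rcases hmn.lt_or_gt with hlt | hlt
    · exact h.not_unlEquiv_of_not_splitsClass hl hu hN (by omega) (by omega) hequiv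
    · exact h.not_unlEquiv_of_not_splitsClass hl hu hN (by omega) (by omega) hequiv.symm

end InvLiftedLam

/-! ### Cyclic order along a wandering orbit -/

lemma LiftedLam.exists_chord_between_classes (h : LiftedLam R) {x x' : ℝ} (hx : Irrational x)
    (hx' : Irrational x') (hlt : x < x') (hlt' : x' < x + 1) (hne : ¬ UnlEquiv R x x') :
    ∃ a ∈ Ioo x x', ∃ b ∈ Ioo x' (x + 1),
      (∀ y ∈ unlClass R x, y < a ∨ b < y) ∧ ∀ y ∈ unlClass R x', y < b ∨ a + 1 < y := by
  obtain ⟨a, b, hr, ha, hb⟩ := h.exists_separating_chord hx hx' hlt hlt' hne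
  refine ⟨a, ha, b, hb, fun y hy => ?_, fun y hy => ?_⟩
  · have hout := mt (hy.2 a b hr (ha.2.trans hb.1) (by linarith [ha.1, hb.2])).2
      (not_memArc_of_le ha.1.le hb.2.le)
    simpa using h.lt_or_lt_of_not_memArc hr hy.1 hout 0
  · have hout := mt (hy.2 b (a + 1) (h.swap_add_one hr) (by linarith [ha.1, hb.2])
      (by linarith [ha.2, hb.1])).2 (not_memArc_of_le hb.1.le (by linarith [ha.2]))
    simpa using h.lt_or_lt_of_not_memArc (h.swap_add_one hr) hy.1 hout 0

namespace IsWandering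

lemma pow_mul {u : ℝ} (hw : IsWandering d R u) (h : InvLiftedLam d R) (N : ℕ) :
    IsWandering d R (d ^ N * u) where
  irrational := h.irrational_pow_mul hw.irrational N
  not_splitsClass n := by
    rw [← mul_assoc, ← pow_add]
    exact hw.not_splitsClass _
  not_unlEquiv {m n} hmn := by
    simp only [← mul_assoc, ← pow_add]
    exact hw.not_unlEquiv (by omega)

/-- Pigeonhole for the configurations `p ∈ C`, based at `x p`, in the classes of a wandering
orbit. -/
lemma finite_times {α κ : Type*} [Finite κ] {u : ℝ} (hw : IsWandering d R u) {C : Set α}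
    {x : α → ℝ} {f : κ → α → ℝ} {c : ℝ} (hf : ∀ k, ∀ p ∈ C, f k p ∈ Ico 0 c)
    (hC : ∀ p ∈ C, ∀ q ∈ C, ¬ UnlEquiv R (x p) (x q) → (∀ k, ⌊f k p⌋ = ⌊f k q⌋) → ¬ x p < x q) :
    {n : ℕ | ∃ p ∈ C, UnlEquiv R (d ^ n * u) (x p)}.Finite := by
  by_contra hinf
  obtain ⟨_, p₀, _⟩ := Set.Infinite.nonempty hinf
  have : Nonempty α := ⟨p₀⟩
  choose! p hpC hp using fun n (hn : n ∈ {n : ℕ | ∃ p ∈ C, UnlEquiv R (d ^ n * u) (x p)}) => hn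
  obtain ⟨J, hJ, hJinf, hfloor⟩ := exists_infinite_subset_floor_eq hinf
    (f := fun k n => f k (p n)) fun k n hn => hf k (p n) (hpC n hn)
  obtain ⟨m, hm, n, hn, hmn⟩ := Set.Infinite.nontrivial hJinf
  have hne : ¬ UnlEquiv R (x (p m)) (x (p n)) := fun hequiv =>
    hw.not_unlEquiv hmn (((hp m (hJ hm)).trans hequiv).trans (hp n (hJ hn)).symm)
  have hle := hC _ (hpC m (hJ hm)) _ (hpC n (hJ hn)) hne fun k => hfloor k m hm n hn
  have hge := hC _ (hpC n (hJ hn)) _ (hpC m (hJ hm)) (fun he => hne he.symm)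
    fun k => hfloor k n hn m hm
  exact hne (le_antisymm (not_lt.1 hge) (not_lt.1 hle) ▸ .refl _)

end IsWandering

/-- Three points of one unlinked class, in cyclic order. -/
structure UnlTriple (R : ℝ → ℝ → Prop) (x y z : ℝ) : Prop where
  irrational : Irrational x
  mid_mem : y ∈ unlClass R x
  right_mem : z ∈ unlClass R x
  left_lt : x < y
  lt_right : y < z
  right_lt : z < x + 1

lemma UnlTriple.add_int {x y z : ℝ} (t : UnlTriple R x y z) (k : ℤ) :
    UnlTriple R (x + k) (y + k) (z + k) where
  irrational := irrational_add_intCast_iff.2 t.irrational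
  mid_mem :=
    ⟨irrational_add_intCast_iff.2 t.mid_mem.1, (t.mid_mem.2.add_int_left k).add_int_right k⟩
  right_mem :=
    ⟨irrational_add_intCast_iff.2 t.right_mem.1, (t.right_mem.2.add_int_left k).add_int_right k⟩
  left_lt := by linarith [t.left_lt]
  lt_right := by linarith [t.lt_right]
  right_lt := by linarith [t.right_lt]

/-- Three points in cyclic order whose images under `x ↦ d x` are not in strict cyclic order. -/
structure FoldedTriple (d : ℕ) (R : ℝ → ℝ → Prop) (x y z : ℝ) : Prop extends UnlTriple R x y z where
  fract_le : Int.fract (d * (z - x)) ≤ Int.fract (d * (y - x))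

namespace FoldedTriple

lemma mul_sub_le {x y z : ℝ} (t : FoldedTriple d R x y z) :
    d * (z - y) ≤ ⌊d * (z - x)⌋ - ⌊d * (y - x)⌋ := by
  have := t.fract_le
  rw [Int.fract, Int.fract] at this
  linarith

lemma floor_lt_floor {x y z : ℝ} (t : FoldedTriple d R x y z) (h : InvLiftedLam d R) :
    ⌊d * (y - x)⌋ < ⌊d * (z - x)⌋ := by
  have hpos : 0 < d * (z - y) := mul_pos h.cast_pos (sub_pos.2 t.lt_right)
  exact_mod_cast (by linarith [t.mul_sub_le] : (⌊d * (y - x)⌋ : ℝ) < ⌊d * (z - x)⌋)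

lemma floor_nonneg {x y z : ℝ} (t : FoldedTriple d R x y z) : 0 ≤ ⌊d * (y - x)⌋ :=
  Int.floor_nonneg.2 (mul_nonneg d.cast_nonneg (by linarith [t.left_lt]))

lemma floor_lt {x y z : ℝ} (t : FoldedTriple d R x y z) (h : InvLiftedLam d R) :
    ⌊d * (z - x)⌋ < d :=
  Int.floor_lt.2 (by push_cast; nlinarith [h.cast_pos, t.right_lt])

/-- A chord `(a, b)` separates the two triples. In each position of `y, z, y', z'` relative to it,
the folding of one of the two triples contradicts the lengths of the other. -/
lemma not_lt_of_close {x y z x' y' z' : ℝ} (t : FoldedTriple d R x y z) (h : InvLiftedLam d R)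
    (t' : FoldedTriple d R x' y' z') (hne : ¬ UnlEquiv R x x')
    (hx : 2 * (d * x') < 2 * (d * x) + 1) (hz : 2 * (d * z') < 2 * (d * z) + 1)
    (hy_floor : ⌊d * (y - x)⌋ = ⌊d * (y' - x')⌋) (hz_floor : ⌊d * (z - x)⌋ = ⌊d * (z' - x')⌋) :
    ¬ x < x' := by
  intro hlt
  have hd := h.cast_pos
  have hmul {p q : ℝ} (hpq : p < q) : d * p < d * q := mul_lt_mul_of_pos_left hpq hd
  obtain ⟨a, ha, b, hb, hout, hout'⟩ := h.exists_chord_between_classes t.irrational t'.irrational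
    hlt (by nlinarith [h.two_le_cast]) hne
  have hfold := t.mul_sub_le
  have hfold' := t'.mul_sub_le
  have hkl := t.floor_lt_floor h
  have hk := t.floor_nonneg
  have hld := t.floor_lt h
  have hyk := Int.lt_floor_add_one (d * (y - x))
  have hyk' := Int.lt_floor_add_one (d * (y' - x'))
  have hzl := Int.floor_le (d * (z' - x'))
  rw [← hy_floor, ← hz_floor] at *
  generalize ⌊d * (y - x)⌋ = k at *
  generalize ⌊d * (z - x)⌋ = l at *
  have hkl' : (k : ℝ) + 1 ≤ l := by exact_mod_cast hkl
  have hk' : (0 : ℝ) ≤ k := by exact_mod_cast hk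
  have hld' : (l : ℝ) + 1 ≤ d := by exact_mod_cast hld
  rcases hout z t.right_mem with hza | hbz
  · linarith [hmul (hza.trans ha.2)]
  rcases hout' y' t'.mid_mem with hyb' | hay'
  · rcases hout y t.mid_mem with hya | hby <;> rcases hout' z' t'.right_mem with hzb' | haz'
    · linarith [hmul hya, hmul hbz, hmul hzb', hmul ha.2]
    · linarith [hmul hya, hmul haz']
    · linarith [hmul hby, hmul hzb', hmul hlt]
    · linarith [hmul ha.1, hmul hby, hmul hyb', hmul haz']
  · linarith [hmul ha.1, hmul hay']

end FoldedTriple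

namespace IsWandering

lemma finite_folding_times {u : ℝ} (hw : IsWandering d R u) (h : InvLiftedLam d R) :
    {n : ℕ | ∃ x y z, FoldedTriple d R x y z ∧ UnlEquiv R (d ^ n * u) x}.Finite := by
  have hd := h.cast_pos
  refine (hw.finite_times (C := {p : ℝ × ℝ × ℝ | p.1 ∈ Ico 0 1 ∧ FoldedTriple d R p.1 p.2.1 p.2.2})
    (x := Prod.fst) (c := d * 4)
    (f := ![fun p => d * (2 * p.1), fun p => d * (2 * p.2.2), fun p => d * (p.2.1 - p.1),
      fun p => d * (p.2.2 - p.1)]) ?_ ?_).subset ?_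
  · rintro k ⟨x, y, z⟩ ⟨⟨hx : 0 ≤ x, hx' : x < 1⟩, t : FoldedTriple d R x y z⟩
    have mem_Ico {w : ℝ} (hw₀ : 0 ≤ w) (hw₄ : w < 4) : d * w ∈ Ico 0 ((d : ℝ) * 4) :=
      ⟨mul_nonneg hd.le hw₀, mul_lt_mul_of_pos_left hw₄ hd⟩
    have := t.left_lt
    have := t.lt_right
    have := t.right_lt
    fin_cases k <;> exact mem_Ico (by linarith) (by linarith)
  · rintro ⟨x, y, z⟩ ⟨-, t⟩ ⟨x', y', z'⟩ ⟨-, t'⟩ hne hfloor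
    have close {p q : ℝ} (hpq : ⌊d * (2 * p)⌋ = ⌊d * (2 * q)⌋) : 2 * (d * q) < 2 * (d * p) + 1 := by
      linarith [(abs_lt.1 (Int.abs_sub_lt_one_of_floor_eq_floor hpq)).1]
    exact t.not_lt_of_close h t' hne (close (hfloor 0)) (close (hfloor 1)) (hfloor 2) (hfloor 3)
  · rintro n ⟨x, y, z, t, hequiv⟩
    obtain ⟨k, hk⟩ := exists_int_add_mem_Ico x 0
    refine ⟨(x + k, y + k, z + k), ⟨by rwa [zero_add] at hk, t.toUnlTriple.add_int k, ?_⟩,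
      hequiv.add_int_right k⟩
    rw [add_sub_add_right_eq_sub, add_sub_add_right_eq_sub]
    exact t.fract_le

lemma finite_spread_times {u : ℝ} (hw : IsWandering d R u) (h : LiftedLam R) {ε : ℝ} (hε : 0 < ε) :
    {n : ℕ | ∃ x y z, UnlTriple R x y z ∧ x + ε ≤ y ∧ y + ε ≤ z ∧ z + ε ≤ x + 1 ∧
      UnlEquiv R (d ^ n * u) x}.Finite := by
  refine (hw.finite_times (x := Prod.fst) (c := 2 / ε) (C := {p : ℝ × ℝ × ℝ | p.1 ∈ Ico 0 1 ∧
      UnlTriple R p.1 p.2.1 p.2.2 ∧ p.1 + ε ≤ p.2.1 ∧ p.2.1 + ε ≤ p.2.2 ∧ p.2.2 + ε ≤ p.1 + 1})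
    (f := ![fun p => p.1 / ε, fun p => p.2.1 / ε, fun p => p.2.2 / ε]) ?_ ?_).subset ?_
  · rintro k ⟨x, y, z⟩ ⟨⟨hx : 0 ≤ x, hx' : x < 1⟩, -, hxy : x + ε ≤ y, hyz : y + ε ≤ z,
      hzx : z + ε ≤ x + 1⟩
    have mem_Ico {w : ℝ} (hw₀ : 0 ≤ w) (hw₂ : w < 2) : w / ε ∈ Ico 0 (2 / ε) :=
      ⟨div_nonneg hw₀ hε.le, div_lt_div_of_pos_right hw₂ hε⟩
    fin_cases k <;> exact mem_Ico (by linarith) (by linarith)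
  · rintro ⟨x, y, z⟩ ⟨-, t, hxy : x + ε ≤ y, -, hzx : z + ε ≤ x + 1⟩
      ⟨x', y', z'⟩ ⟨-, t', -, hyz' : y' + ε ≤ z', -⟩ hne hfloor (hlt : x < x')
    have close {p q : ℝ} (hpq : ⌊p / ε⌋ = ⌊q / ε⌋) : q < p + ε := by
      have := (abs_lt.1 (Int.abs_sub_lt_one_of_floor_eq_floor hpq.symm)).2
      rw [← sub_div, div_lt_one hε] at this
      linarith
    have hx : x' < x + ε := close (hfloor 0)
    have hy : y < y' + ε := close (hfloor 1).symm
    have hz : z' < z + ε := close (hfloor 2)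
    obtain ⟨a, ha, b, -, hout, hout'⟩ := h.exists_chord_between_classes t.irrational t'.irrational
      hlt (by linarith [t.lt_right]) hne
    have hby : b < y := (hout y t.mid_mem).resolve_left (by linarith [ha.2])
    have hzb : z' < b := (hout' z' t'.right_mem).resolve_right (by linarith [ha.1])
    linarith
  · rintro n ⟨x, y, z, t, hxy, hyz, hzx, hequiv⟩
    obtain ⟨k, hk⟩ := exists_int_add_mem_Ico x 0
    exact ⟨(x + k, y + k, z + k), ⟨by rwa [zero_add] at hk, t.add_int k, by linarith, by linarith,
      by linarith⟩, hequiv.add_int_right k⟩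

end IsWandering

/-- A wandering class on whose forward orbit `x ↦ d x` preserves the cyclic order. -/
structure IsOrderedWandering (d : ℕ) (R : ℝ → ℝ → Prop) (u : ℝ) : Prop extends
    IsWandering d R u where
  not_foldedTriple {n : ℕ} {x y z : ℝ} : UnlEquiv R (d ^ n * u) x → ¬ FoldedTriple d R x y z

lemma IsWandering.exists_isOrderedWandering_pow_mul {u : ℝ} (hw : IsWandering d R u)
    (h : InvLiftedLam d R) : ∃ N : ℕ, IsOrderedWandering d R (d ^ N * u) := by
  obtain ⟨B, hB⟩ := (hw.finite_folding_times h).bddAbove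
  refine ⟨B + 1, hw.pow_mul h _, fun {n x y z} hequiv t => ?_⟩
  rw [← mul_assoc, ← pow_add] at hequiv
  have : n + (B + 1) ≤ B := hB ⟨x, y, z, t, hequiv⟩
  omega

/-! ### Inscribed polygons -/

/-- The vertices `v 0 < v 1 < ⋯ < v P = v 0 + 1` of a `P`-gon inscribed in one unlinked class. -/
structure UnlPolygon (R : ℝ → ℝ → Prop) (P : ℕ) (v : ℕ → ℝ) : Prop where
  mem (i : ℕ) : v i ∈ unlClass R (v 0)
  strictMonoOn : StrictMonoOn v (Iic P)
  closes : v P = v 0 + 1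

/-- The length of the `i`-th side of a polygon, as a length of arc. -/
def gap (v : ℕ → ℝ) (i : ℕ) : ℝ := v (i + 1) - v i

lemma infinite_unlClass_inter_Ioo {u : ℝ} (hinf : ¬ FiniteUnlClass R u) :
    (unlClass R u ∩ Ioo u (u + 1)).Infinite := by
  intro hfin
  refine hinf fun a b => Finite.of_finite_image
    (((hfin.insert u).prod (finite_Icc ⌊a - u⌋ ⌊b - u⌋)).subset ?_)
    (f := fun t => (u + Int.fract (t - u), ⌊t - u⌋)) fun s _ t _ hst => ?_
  · rintro _ ⟨t, ⟨ht, hta, htb⟩, rfl⟩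
    refine ⟨?_, Int.floor_mono (by linarith), Int.floor_mono (by linarith)⟩
    rcases (Int.fract_nonneg (t - u)).eq_or_lt with hzero | hpos
    · exact .inl (add_eq_left.2 hzero.symm)
    · refine .inr ⟨?_, by linarith, by linarith [Int.fract_lt_one (t - u)]⟩
      convert add_int_mem_unlClass ht (-⌊t - u⌋) using 1
      push_cast
      linarith [Int.floor_add_fract (t - u)]
  · obtain ⟨hfract, hfloor⟩ := Prod.mk.inj hst
    linarith [Int.floor_add_fract (s - u), Int.floor_add_fract (t - u),
      (congrArg Int.cast hfloor : (⌊s - u⌋ : ℝ) = ⌊t - u⌋)]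

lemma exists_strictMonoOn_of_infinite_inter_Ioo {S : Set ℝ} {a b : ℝ} (hab : a < b)
    (hS : (S ∩ Ioo a b).Infinite) {P : ℕ} (hP : 1 ≤ P) :
    ∃ v : ℕ → ℝ, v 0 = a ∧ v P = b ∧ StrictMonoOn v (Iic P) ∧
      ∀ i, v i = a ∨ v i = b ∨ v i ∈ S := by
  obtain ⟨t, ht, hcard⟩ := hS.exists_subset_card_eq (P - 1)
  have hat : a ∉ insert b t := Finset.mem_insert.not.2
    (not_or.2 ⟨hab.ne, fun hmem => (ht hmem).2.1.false⟩)
  have hbt : b ∉ t := fun hmem => (ht hmem).2.2.false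
  set T := insert a (insert b t) with hT
  have hTcard : T.card = P + 1 := by
    rw [hT, Finset.card_insert_of_notMem hat, Finset.card_insert_of_notMem hbt, hcard]
    omega
  have hTmem {x : ℝ} : x ∈ T ↔ x = a ∨ x = b ∨ x ∈ t := by simp only [hT, Finset.mem_insert]
  refine ⟨fun i => T.orderEmbOfFin hTcard (Fin.ofNat (P + 1) i), ?_, ?_, fun i hi j hj hij => ?_,
    fun i => ?_⟩
  · refine (Finset.orderEmbOfFin_zero hTcard P.succ_pos).trans (le_antisymm ?_ ?_)
    · exact T.min'_le _ (hTmem.2 (.inl rfl))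
    · refine T.le_min' _ _ fun x hx => ?_
      rcases hTmem.1 hx with rfl | rfl | hx
      exacts [le_rfl, hab.le, (ht hx).2.1.le]
  · have hlast : Fin.ofNat (P + 1) P = ⟨P + 1 - 1, by omega⟩ :=
      Fin.ext (Nat.mod_eq_of_lt P.lt_succ_self)
    refine (congrArg _ hlast).trans
      ((Finset.orderEmbOfFin_last hTcard P.succ_pos).trans (le_antisymm ?_ ?_))
    · refine T.max'_le _ _ fun x hx => ?_
      rcases hTmem.1 hx with rfl | rfl | hx
      exacts [hab.le, le_rfl, (ht hx).2.2.le]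
    · exact T.le_max' _ (hTmem.2 (.inr (.inl rfl)))
  · refine (T.orderEmbOfFin hTcard).strictMono (Fin.lt_def.2 ?_)
    simpa only [Fin.val_ofNat, Nat.mod_eq_of_lt (Nat.lt_succ_of_le hi),
      Nat.mod_eq_of_lt (Nat.lt_succ_of_le hj)] using hij
  · exact (hTmem.1 (T.orderEmbOfFin_mem hTcard _)).imp_right (.imp_right fun hx => (ht hx).1)

lemma exists_unlPolygon {u : ℝ} (hu : Irrational u) (hinf : ¬ FiniteUnlClass R u) {P : ℕ}
    (hP : 1 ≤ P) : ∃ v, v 0 = u ∧ UnlPolygon R P v := by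
  obtain ⟨v, rfl, hlast, hmono, hmem⟩ :=
    exists_strictMonoOn_of_infinite_inter_Ioo (lt_add_one u) (infinite_unlClass_inter_Ioo hinf) hP
  refine ⟨v, rfl, fun i => ?_, hmono, hlast⟩
  rcases hmem i with heq | heq | hi
  · rw [heq]
    exact mem_unlClass_self hu
  · rw [heq]
    exact_mod_cast add_int_mem_unlClass (mem_unlClass_self hu) 1
  · exact hi

/-- The vertices of the image of a polygon under `x ↦ d x`, listed from the image of `v 0`. -/
def polygonImage (d P : ℕ) (v : ℕ → ℝ) (i : ℕ) : ℝ :=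
  d * v 0 + if i < P then Int.fract (d * (v i - v 0)) else 1

lemma UnlTriple.rotate {x y z : ℝ} (t : UnlTriple R x y z) : UnlTriple R y z (x + 1) where
  irrational := t.mid_mem.1
  mid_mem := ⟨t.right_mem.1, t.mid_mem.2.symm.trans t.right_mem.2⟩
  right_mem := ⟨by exact_mod_cast (irrational_add_intCast_iff (m := 1)).2 t.irrational,
    by exact_mod_cast t.mid_mem.2.symm.add_int_right 1⟩
  left_lt := t.lt_right
  lt_right := t.right_lt
  right_lt := by linarith [t.left_lt]

namespace IsOrderedWandering

variable {u x y z : ℝ} {n : ℕ}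

lemma fract_lt_fract (hw : IsOrderedWandering d R u) (hx : UnlEquiv R (d ^ n * u) x)
    (t : UnlTriple R x y z) : Int.fract (d * (y - x)) < Int.fract (d * (z - x)) :=
  not_le.1 fun hle => hw.not_foldedTriple hx ⟨t, hle⟩

lemma fract_pos (hw : IsOrderedWandering d R u) (hx : UnlEquiv R (d ^ n * u) x)
    (t : UnlTriple R x y z) : 0 < Int.fract (d * (y - x)) := by
  refine (Int.fract_nonneg _).lt_of_ne fun hzero => ?_
  have hlt := hw.fract_lt_fract (hx.trans t.mid_mem.2) t.rotate
  have hturn : Int.fract (d * (x + 1 - y)) = 0 := by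
    obtain ⟨k, hk⟩ := Int.fract_eq_zero_iff.1 hzero.symm
    exact Int.fract_eq_zero_iff.2 ⟨d - k, by push_cast; linarith⟩
  linarith [Int.fract_nonneg (d * (z - y))]

end IsOrderedWandering

namespace UnlPolygon

variable {P : ℕ} {v : ℕ → ℝ} {i j : ℕ}

lemma lt (hv : UnlPolygon R P v) (hij : i < j) (hj : j ≤ P) : v i < v j :=
  hv.strictMonoOn (hij.le.trans hj) hj hij

lemma le (hv : UnlPolygon R P v) (hij : i ≤ j) (hj : j ≤ P) : v i ≤ v j :=
  hv.strictMonoOn.monotoneOn (hij.trans hj) hj hij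

lemma irrational (hv : UnlPolygon R P v) (i : ℕ) : Irrational (v i) := (hv.mem i).1

lemma mem_of (hv : UnlPolygon R P v) (i j : ℕ) : v j ∈ unlClass R (v i) :=
  ⟨hv.irrational j, (hv.mem i).2.symm.trans (hv.mem j).2⟩

lemma gap_pos (hv : UnlPolygon R P v) (hi : i < P) : 0 < gap v i :=
  sub_pos.2 (hv.lt (Nat.lt_succ_self i) hi)

lemma gap_lt_one (hv : UnlPolygon R P v) (hP : 2 ≤ P) (hi : i < P) : gap v i < 1 := by
  have hclose := hv.closes
  rw [gap]
  rcases i.eq_zero_or_pos with rfl | hpos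
  · linarith [hv.lt (by omega : 0 + 1 < P) le_rfl]
  · linarith [hv.lt hpos hi.le, hv.le (by omega : i + 1 ≤ P) le_rfl]

lemma sum_gap (hv : UnlPolygon R P v) : ∑ i ∈ Finset.range P, gap v i = 1 := by
  simp only [gap, Finset.sum_range_sub, hv.closes, add_sub_cancel_left]

lemma unlTriple (hv : UnlPolygon R P v) {k : ℕ} (hij : i < j) (hjk : j < k) (hk : k < P) :
    UnlTriple R (v i) (v j) (v k) where
  irrational := hv.irrational i
  mid_mem := hv.mem_of i j
  right_mem := hv.mem_of i k
  left_lt := hv.lt hij (by omega)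
  lt_right := hv.lt hjk hk.le
  right_lt := by linarith [hv.closes, hv.lt hk le_rfl, hv.le (Nat.zero_le i) (by omega)]

end UnlPolygon

lemma polygonImage_zero (hP : 0 < P) : polygonImage d P v 0 = d * v 0 := by
  simp only [polygonImage, if_pos hP, sub_self, mul_zero, Int.fract_zero, add_zero]

lemma exists_polygonImage_eq_mul_add_int (hclose : v P = v 0 + 1) (hi : i ≤ P) :
    ∃ k : ℤ, polygonImage d P v i = d * v i + k := by
  rcases hi.lt_or_eq with hlt | rfl
  · refine ⟨-⌊d * (v i - v 0)⌋, ?_⟩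
    rw [polygonImage, if_pos hlt, Int.fract]
    push_cast
    ring
  · refine ⟨1 - d, ?_⟩
    rw [polygonImage, if_neg (lt_irrefl _), hclose]
    push_cast
    ring

namespace UnlPolygon

variable {u : ℝ} {n : ℕ}

lemma strictMonoOn_polygonImage (hv : UnlPolygon R P v) (hw : IsOrderedWandering d R u)
    (hbase : v 0 = d ^ n * u) (hP : 3 ≤ P) : StrictMonoOn (polygonImage d P v) (Iic P) := by
  have hequiv : UnlEquiv R (d ^ n * u) (v 0) := hbase ▸ .refl _
  intro i _ j hj hij
  have hi : i < P := hij.trans_le hj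
  refine add_lt_add_right ?_ _
  rw [if_pos hi]
  split_ifs with hjP
  · rcases i.eq_zero_or_pos with rfl | hi₀
    · rw [sub_self, mul_zero, Int.fract_zero]
      rcases (Nat.succ_le_of_lt hij).lt_or_eq with hj₂ | rfl
      · exact (Int.fract_nonneg _).trans_lt
          (hw.fract_lt_fract hequiv (hv.unlTriple zero_lt_one hj₂ hjP))
      · exact hw.fract_pos hequiv (hv.unlTriple zero_lt_one one_lt_two hP)
    · exact hw.fract_lt_fract hequiv (hv.unlTriple hi₀ hij hjP)
  · exact Int.fract_lt_one _

lemma image (hv : UnlPolygon R P v) (h : InvLiftedLam d R) (hw : IsOrderedWandering d R u)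
    (hbase : v 0 = d ^ n * u) (hP : 3 ≤ P) : UnlPolygon R P (polygonImage d P v) where
  mem i := by
    have hequiv (j : ℕ) : UnlEquiv R (d * v 0) (d * v j) := unlEquiv_mul_of_not_splitsClass
      (hbase ▸ hw.not_splitsClass n) (hv.irrational j) (hv.mem j).2
    have hmem (j : ℕ) : d * v j ∈ unlClass R (d * v 0) :=
      ⟨h.irrational_mul.2 (hv.irrational j), hequiv j⟩
    rw [polygonImage_zero (by omega)]
    rcases lt_or_ge i P with hi | hi
    · obtain ⟨k, hk⟩ := exists_polygonImage_eq_mul_add_int hv.closes hi.le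
      exact hk ▸ add_int_mem_unlClass (hmem i) k
    · rw [polygonImage, if_neg hi.not_gt]
      exact_mod_cast add_int_mem_unlClass (hmem 0) 1
  strictMonoOn := hv.strictMonoOn_polygonImage hw hbase hP
  closes := by
    rw [polygonImage_zero (by omega), polygonImage, if_neg (lt_irrefl _)]

end UnlPolygon

/-- An orbit of polygons: the vertices of `V (n + 1)` are, modulo `ℤ`, the images of those of `V n`
under `x ↦ d x`, and the vertex labelled `0` follows the orbit of `u`. -/
structure UnlPolygonOrbit (d : ℕ) (R : ℝ → ℝ → Prop) (P : ℕ) (u : ℝ) (V : ℕ → ℕ → ℝ) : Prop where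
  polygon (n : ℕ) : UnlPolygon R P (V n)
  base (n : ℕ) : V n 0 = d ^ n * u
  step (n : ℕ) {i : ℕ} : i ≤ P → ∃ k : ℤ, V (n + 1) i = d * V n i + k

lemma IsOrderedWandering.exists_unlPolygonOrbit {u : ℝ} (hw : IsOrderedWandering d R u)
    (h : InvLiftedLam d R) (hinf : ¬ FiniteUnlClass R u) {P : ℕ} (hP : 3 ≤ P) :
    ∃ V, UnlPolygonOrbit d R P u V := by
  obtain ⟨v, hv₀, hv⟩ := exists_unlPolygon hw.irrational hinf (by omega : 1 ≤ P)
  have invariant (n : ℕ) : UnlPolygon R P ((polygonImage d P)^[n] v) ∧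
      (polygonImage d P)^[n] v 0 = d ^ n * u := by
    induction n with
    | zero => exact ⟨hv, by rw [iterate_zero_apply, hv₀, pow_zero, one_mul]⟩
    | succ n ih =>
      rw [iterate_succ_apply']
      refine ⟨ih.1.image h hw ih.2 hP, ?_⟩
      rw [polygonImage_zero (by omega), ih.2, pow_succ', mul_assoc]
  refine ⟨fun n => (polygonImage d P)^[n] v, fun n => (invariant n).1, fun n => (invariant n).2,
    fun n i hi => ?_⟩
  rw [iterate_succ_apply']
  exact exists_polygonImage_eq_mul_add_int (invariant n).1.closes hi

lemma exists_record {g : ℕ → ℕ → ℝ} {P : ℕ} {c₀ : ℝ} (hc₀ : c₀ < 1)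
    (hlt : ∀ n, ∀ i < P, g n i < 1) (hsup : ∀ c < 1, ∃ n, ∃ i < P, c < g n i) (T₀ : ℕ) :
    ∃ T ≥ T₀, ∃ m < P, c₀ < g T m ∧ ∀ n ≤ T, ∀ i < P, g n i ≤ g T m := by
  classical
  obtain ⟨c, hc, hc₀c, hearly⟩ : ∃ c < 1, c₀ ≤ c ∧ ∀ n < T₀, ∀ i < P, g n i ≤ c := by
    let s := insert c₀ ((Finset.range T₀ ×ˢ Finset.range P).image fun p => g p.1 p.2)
    have hs : s.Nonempty := Finset.insert_nonempty _ _
    refine ⟨s.max' hs, (Finset.max'_lt_iff s hs).2 fun x hx => ?_,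
      s.le_max' _ (Finset.mem_insert_self _ _), fun n hn i hi => s.le_max' _ ?_⟩
    · rcases Finset.mem_insert.1 hx with rfl | hx
      · exact hc₀
      · obtain ⟨p, hp, rfl⟩ := Finset.mem_image.1 hx
        exact hlt _ _ (Finset.mem_range.1 (Finset.mem_product.1 hp).2)
    · exact Finset.mem_insert_of_mem (Finset.mem_image.2 ⟨(n, i), by simp [hn, hi], rfl⟩)
  have hex := hsup c hc
  obtain ⟨i₀, hi₀, hci₀⟩ := Nat.find_spec hex
  have hbefore : ∀ n < Nat.find hex, ∀ i < P, g n i ≤ c := fun n hn i hi =>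
    not_lt.1 fun hci => Nat.find_min hex hn ⟨i, hi, hci⟩
  generalize Nat.find hex = T at hci₀ hbefore
  obtain ⟨m, hm, hmax⟩ := (Finset.range P).exists_max_image (g T) ⟨i₀, Finset.mem_range.2 hi₀⟩
  simp only [Finset.mem_range] at hm hmax
  have hcm : c < g T m := hci₀.trans_le (hmax i₀ hi₀)
  refine ⟨T, not_lt.1 fun hT => hcm.not_ge (hearly T hT m hm), m, hm, hc₀c.trans_lt hcm,
    fun n hn i hi => ?_⟩
  rcases hn.lt_or_eq with hn | rfl
  · exact (hbefore n hn i hi).trans hcm.le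
  · exact hmax i hi

namespace UnlPolygon

variable {P : ℕ} {v : ℕ → ℝ}

lemma one_le_gap_add_gap (hv : UnlPolygon R P v) {i j : ℕ} (hi : i < P) (hj : j < P) (hij : i ≠ j)
    {ε : ℝ} (hε : 0 ≤ ε) (hsmall : ∀ k < P, k ≠ i → k ≠ j → gap v k ≤ ε) :
    1 ≤ gap v i + gap v j + P * ε := by
  have hrest : ∑ k ∈ ((Finset.range P).erase i).erase j, gap v k ≤ P * ε := by
    refine (Finset.sum_le_card_nsmul _ _ ε fun k hk => ?_).trans ?_
    · simp only [Finset.mem_erase, Finset.mem_range] at hk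
      exact hsmall k hk.2.2 hk.2.1 hk.1
    · rw [nsmul_eq_mul]
      gcongr
      exact (Finset.card_le_card ((Finset.erase_subset _ _).trans (Finset.erase_subset _ _))).trans
        (Finset.card_range P).le
  have hsum := hv.sum_gap
  rw [← Finset.add_sum_erase _ _ (Finset.mem_range.2 hi), ← Finset.add_sum_erase _ _
    (Finset.mem_erase.2 ⟨hij.symm, Finset.mem_range.2 hj⟩)] at hsum
  linarith

lemma exists_gap_gt_of_mem_arc (hv : UnlPolygon R P v) {s δ : ℝ} (hδ : δ ≤ 1)
    (harc : ∀ i ≤ P, ∃ k : ℤ, v i + k ∈ Ioo s (s + δ)) : ∃ i < P, 1 - δ < gap v i := by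
  classical
  obtain ⟨k₀, hk₀⟩ := harc 0 (Nat.zero_le P)
  have hex : ∃ i, i ≤ P ∧ s + δ ≤ v i + k₀ :=
    ⟨P, le_rfl, by rw [hv.closes]; linarith [hk₀.1]⟩
  obtain ⟨hiP, hbeyond⟩ := Nat.find_spec hex
  have hmin := fun n => Nat.find_min hex (m := n)
  generalize Nat.find hex = i at *
  obtain _ | i := i
  · linarith [hk₀.2]
  have hinside : v i + k₀ < s + δ := not_le.1 fun hle => hmin i i.lt_succ_self ⟨by omega, hle⟩
  obtain ⟨k, hk⟩ := harc (i + 1) hiP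
  have hkk₀ : (k : ℝ) + 1 ≤ k₀ := by
    exact_mod_cast (by linarith [hk.2] : (k : ℝ) < k₀)
  exact ⟨i, by omega, by rw [gap]; linarith [hk.1]⟩

lemma exists_int_add_mem_Icc_gap (hv : UnlPolygon R P v) {i j : ℕ} (hi : i ≤ P) (hj : j < P) :
    ∃ k : ℤ, v i + k ∈ Icc (v (j + 1)) (v j + 1) := by
  rcases le_or_gt i j with hij | hij
  · exact ⟨1, by
      push_cast
      linarith [hv.closes, hv.le hj le_rfl, hv.le i.zero_le hi], by
      push_cast
      linarith [hv.le hij hj.le]⟩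
  · exact ⟨0, by simpa using hv.le hij hi, by
      push_cast
      linarith [hv.closes, hv.le hi le_rfl, hv.le j.zero_le hj.le]⟩

end UnlPolygon

namespace UnlPolygonOrbit

variable {P : ℕ} {u : ℝ} {V : ℕ → ℕ → ℝ}

lemma gap_succ (hV : UnlPolygonOrbit d R P u V) (hP : 2 ≤ P) (n : ℕ) {i : ℕ} (hi : i < P) :
    gap (V (n + 1)) i = Int.fract (d * gap (V n) i) := by
  obtain ⟨k, hk⟩ := hV.step n hi.le
  obtain ⟨l, hl⟩ := hV.step n (Nat.succ_le_of_lt hi)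
  refine (Int.fract_eq_iff.2 ⟨((hV.polygon _).gap_pos hi).le, (hV.polygon _).gap_lt_one hP hi,
    k - l, ?_⟩).symm
  rw [gap, gap, hk, hl]
  push_cast
  ring

lemma gap_succ_of_lt (hV : UnlPolygonOrbit d R P u V) (hP : 2 ≤ P) {n i : ℕ} (hi : i < P)
    (hlt : d * gap (V n) i < 1) : gap (V (n + 1)) i = d * gap (V n) i := by
  rw [hV.gap_succ hP n hi, Int.fract_eq_self]
  exact ⟨mul_nonneg d.cast_nonneg ((hV.polygon n).gap_pos hi).le, hlt⟩

lemma exists_wrap (hV : UnlPolygonOrbit d R P u V) (hd : 2 ≤ d) (hP : 2 ≤ P) {i : ℕ} (hi : i < P)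
    (N : ℕ) : ∃ n ≥ N, 1 ≤ d * gap (V n) i := by
  refine exists_ge_one_le_mul_of_expanding hd (w := fun n => gap (V n) i) (fun n =>
    ⟨(hV.polygon n).gap_pos hi, ((hV.polygon n).gap_lt_one hP hi).le⟩) (fun n => ?_) N
  exact ⟨-⌊d * gap (V n) i⌋, by rw [hV.gap_succ hP n hi, Int.fract]; push_cast; ring⟩

lemma exists_last_wrap (hV : UnlPolygonOrbit d R P u V) (hd : 1 ≤ d) (hP : 2 ≤ P) {i : ℕ}
    (hi : i < P) {T : ℕ} (hwrap : ∃ n < T, 1 ≤ d * gap (V n) i) :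
    ∃ n < T, 1 ≤ d * gap (V n) i ∧ gap (V (n + 1)) i ≤ gap (V T) i := by
  induction T with
  | zero => omega
  | succ T ih =>
    rcases le_or_gt 1 (d * gap (V T) i) with hlast | hlast
    · exact ⟨T, T.lt_succ_self, hlast, le_rfl⟩
    obtain ⟨m, hm, hwrapm⟩ := hwrap
    have hmT : m < T := (Nat.lt_succ_iff.1 hm).lt_of_ne fun heq => by
      rw [heq] at hwrapm
      linarith
    obtain ⟨n, hn, hwrapn, hle⟩ := ih ⟨m, hmT, hwrapm⟩
    refine ⟨n, hn.trans T.lt_succ_self, hwrapn, hle.trans ?_⟩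
    rw [hV.gap_succ_of_lt hP hi hlast]
    exact le_mul_of_one_le_left ((hV.polygon T).gap_pos hi).le (by exact_mod_cast hd)

lemma exists_forall_ge_gap_lt (hV : UnlPolygonOrbit d R P u V) (hw : IsWandering d R u)
    (h : LiftedLam R) {ε : ℝ} (hε : 0 < ε) :
    ∃ N, ∀ n ≥ N, ∀ {i j k : ℕ}, i < P → j < P → k < P → i ≠ j → j ≠ k → i ≠ k →
      ε ≤ gap (V n) i → ε ≤ gap (V n) j → gap (V n) k < ε := by
  obtain ⟨B, hB⟩ := (hw.finite_spread_times h hε).bddAbove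
  refine ⟨B + 1, fun n hn => ?_⟩
  have hv := hV.polygon n
  have sorted {i j k : ℕ} (hij : i < j) (hjk : j < k) (hk : k < P) (hεi : ε ≤ gap (V n) i)
      (hεj : ε ≤ gap (V n) j) (hεk : ε ≤ gap (V n) k) : False := by
    simp only [gap] at hεi hεj hεk
    refine (hn.trans (hB ⟨V n i, V n j, V n k, hv.unlTriple hij hjk hk, ?_, ?_, ?_, ?_⟩)).not_gt
      B.lt_succ_self
    · linarith [hv.le hij (hjk.trans hk).le]
    · linarith [hv.le hjk hk.le]
    · linarith [hv.le hk le_rfl, hv.closes, hv.le i.zero_le (hij.trans (hjk.trans hk)).le]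
    · exact hV.base n ▸ (hv.mem i).2
  intro i j k hi hj hk hij hjk hik hεi hεj
  by_contra! hεk
  rcases hij.lt_or_gt with hij | hij <;> rcases hjk.lt_or_gt with hjk | hjk <;>
    rcases hik.lt_or_gt with hik | hik <;> grind

lemma gap_succ_lt_of_gap_lt (hV : UnlPolygonOrbit d R P u V) (hP : 3 ≤ P) {n i : ℕ} (hi : i < P)
    {c ε : ℝ} (hc : 0 ≤ c) (hε : 0 < ε) (hεc : (d + P) * ε ≤ 1 - c)
    (hbound : ∀ j < P, gap (V (n + 1)) j ≤ c)
    (hlarge : ∀ {i j k : ℕ}, i < P → j < P → k < P → i ≠ j → j ≠ k → i ≠ k →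
      ε ≤ gap (V (n + 1)) i → ε ≤ gap (V (n + 1)) j → gap (V (n + 1)) k < ε)
    (hsmall : gap (V n) i < ε) (hd : 0 < d) : gap (V (n + 1)) i < ε := by
  by_contra! hge
  have hdε : d * gap (V n) i < d * ε := mul_lt_mul_of_pos_left hsmall (Nat.cast_pos.2 hd)
  have hPε : 0 ≤ P * ε := by positivity
  have hgap := hV.gap_succ_of_lt (by omega) hi (n := n) (by linarith)
  obtain ⟨j, hj, hij, hrest⟩ : ∃ j < P, i ≠ j ∧ ∀ k < P, k ≠ i → k ≠ j →
      gap (V (n + 1)) k ≤ ε := by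
    by_cases hother : ∃ j < P, i ≠ j ∧ ε ≤ gap (V (n + 1)) j
    · obtain ⟨j, hj, hij, hεj⟩ := hother
      exact ⟨j, hj, hij, fun k hk hki hkj =>
        (hlarge hi hj hk hij hkj.symm hki.symm hge hεj).le⟩
    · push Not at hother
      obtain ⟨j, hj, hij⟩ : ∃ j < P, i ≠ j := ⟨if i = 0 then 1 else 0, by grind, by grind⟩
      exact ⟨j, hj, hij, fun k hk hki _ => (hother k hk hki.symm).le⟩
  have hsum := (hV.polygon (n + 1)).one_le_gap_add_gap hi hj hij hε.le hrest
  linarith [hbound j hj]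

lemma exists_gap_gt (hV : UnlPolygonOrbit d R P u V) (hw : IsWandering d R u)
    (h : InvLiftedLam d R) (hP : 3 ≤ P) {c : ℝ} (hc : c < 1) :
    ∃ n, ∃ i < P, c < gap (V n) i := by
  by_contra! hbound
  have hc₀ : 0 < c := ((hV.polygon 0).gap_pos (by omega)).trans_le (hbound 0 0 (by omega))
  have hdP : (0 : ℝ) < d + P := by linarith [h.cast_pos, (P.cast_nonneg : (0 : ℝ) ≤ P)]
  let ε := (1 - c) / (d + P)
  have hε : 0 < ε := div_pos (by linarith) hdP
  have hεc : (d + P) * ε = 1 - c := mul_div_cancel₀ _ hdP.ne'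
  obtain ⟨N, hN⟩ := hV.exists_forall_ge_gap_lt hw h.toLiftedLam hε
  obtain ⟨i, hi, hsmall⟩ : ∃ i < P, gap (V N) i < ε := by
    by_contra! hge
    exact (hN N le_rfl (by omega) (by omega) (by omega) zero_ne_one (by omega) (by omega)
      (hge 0 (by omega)) (hge 1 (by omega))).not_ge (hge 2 (by omega))
  have stays_small (n : ℕ) (hn : N ≤ n) : gap (V n) i < ε := by
    induction n, hn using Nat.le_induction with
    | base => exact hsmall
    | succ n hn ih =>
      exact hV.gap_succ_lt_of_gap_lt hP hi hc₀.le hε hεc.le (hbound _) (hN _ (by omega)) ih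
        (by exact_mod_cast h.cast_pos)
  obtain ⟨n, hn, hwrap⟩ := hV.exists_wrap h.two_le (by omega) hi N
  nlinarith [stays_small n hn, h.cast_pos, (P.cast_nonneg : (0 : ℝ) ≤ P)]

end UnlPolygonOrbit

namespace UnlPolygon

variable {P : ℕ} {v : ℕ → ℝ}

/-- A chord `(a, b)` separates `x` from `v j`. All vertices of the polygon lie in
`[v (j + 1), b] ∪ [a + 1, v j + 1]`, and `x ↦ d x` maps both intervals into one short arc. -/
lemma exists_int_mul_mem_Ioo (hv : UnlPolygon R P v) (h : InvLiftedLam d R) {x y : ℝ}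
    (hx : Irrational x) (hy : y ∈ unlClass R x) (hyx : y < x + 1) {j : ℕ} (hj : j < P)
    (hne : ¬ UnlEquiv R x (v j)) (hlt : x < v j) (hclose : 2 * (d * v j) < 2 * (d * x) + 1)
    (hwrap : 1 ≤ d * (y - x)) (hfloor : ⌊d * (y - x)⌋ = ⌊d * gap v j⌋)
    (hhalf : Int.fract (d * gap v j) ≤ 1 / 2) {i : ℕ} (hi : i ≤ P) :
    ∃ k : ℤ, d * v i + k ∈ Ioo (d * x) (d * x + Int.fract (d * (y - x))) := by
  have hmul {p q : ℝ} (hpq : p < q) : d * p < d * q := mul_lt_mul_of_pos_left hpq h.cast_pos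
  obtain ⟨a, ha, b, hb, hout, hout'⟩ := h.exists_chord_between_classes hx (hv.irrational j) hlt
    (by nlinarith [h.two_le_cast]) hne
  have hfloor_lt : (⌊d * (y - x)⌋ : ℝ) + 1 ≤ d := by
    have : ⌊d * (y - x)⌋ < (d : ℤ) := Int.floor_lt.2 (by push_cast; linarith [hmul hyx])
    exact_mod_cast this
  have hfract := Int.floor_add_fract (d * (y - x))
  have hfract' := Int.floor_add_fract (d * gap v j)
  have hnonneg := Int.fract_nonneg (d * gap v j)
  rw [← hfloor] at hfract'
  rw [gap] at *
  have hby : b < y := (hout y hy).resolve_left fun hya => by linarith [hmul (hya.trans ha.2)]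
  have hright : v (j + 1) < b := (hout' _ (hv.mem_of j (j + 1))).resolve_right fun hout => by
    linarith [hmul hout, hmul ha.1]
  obtain ⟨k, hk⟩ := hv.exists_int_add_mem_Icc_gap hi hj
  have hlow := mul_le_mul_of_nonneg_left hk.1 h.cast_pos.le
  have hhigh := mul_le_mul_of_nonneg_left hk.2 h.cast_pos.le
  rcases hout' _ (add_int_mem_unlClass (hv.mem_of j i) k) with hkb | hak
  · refine ⟨d * k - ⌊d * (y - x)⌋, ?_, ?_⟩ <;> push_cast <;>
      linarith [hmul hlt, hmul hkb, hmul hby]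
  · refine ⟨d * k - d, ?_, ?_⟩ <;> push_cast <;>
      linarith [hmul ha.1, hmul hak, hmul hby, hmul hright]

end UnlPolygon

namespace UnlPolygon

variable {P : ℕ} {v : ℕ → ℝ} {i j : ℕ}

lemma gap_add_gap_le_one (hv : UnlPolygon R P v) (hi : i < P) (hj : j < P) (hij : i ≠ j) :
    gap v i + gap v j ≤ 1 := by
  simp only [gap]
  rcases hij.lt_or_gt with hlt | hlt
  · linarith [hv.closes, hv.le hlt hj.le, hv.le hj le_rfl, hv.le i.zero_le hi.le]
  · linarith [hv.closes, hv.le hlt hi.le, hv.le hi le_rfl, hv.le j.zero_le hj.le]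

lemma eq_of_fract_le (hv : UnlPolygon R P v) (hi : i < P) (hj : j < P)
    (hle : Int.fract (v i) ≤ Int.fract (v j)) (hlt : Int.fract (v j) - Int.fract (v i) < gap v i) :
    i = j := by
  have hfi := Int.floor_add_fract (v i)
  have hfj := Int.floor_add_fract (v j)
  rw [gap] at hlt
  rcases lt_trichotomy i j with hij | hij | hij
  · have hfloor : (⌊v i⌋ : ℝ) + 1 ≤ ⌊v j⌋ := by
      exact_mod_cast (by linarith [hv.le hij hj.le] : (⌊v i⌋ : ℝ) < ⌊v j⌋)
    linarith [hv.closes, hv.lt hj le_rfl, hv.le i.zero_le hi.le]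
  · exact hij
  · have hfloor : (⌊v j⌋ : ℝ) + 1 ≤ ⌊v i⌋ := by
      exact_mod_cast (by linarith [hv.lt hij hi.le] : (⌊v j⌋ : ℝ) < ⌊v i⌋)
    linarith [hv.closes, hv.le hi le_rfl, hv.le j.zero_le hj.le]

end UnlPolygon

namespace UnlPolygonOrbit

variable {P : ℕ} {u : ℝ} {V : ℕ → ℕ → ℝ}

/-- The polygon at time `n + 1` lies in the arc under side `i` of the polygon at time `m + 1`. -/
lemma exists_gap_succ_gt (hV : UnlPolygonOrbit d R P u V) (h : InvLiftedLam d R) (hP : 2 ≤ P)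
    {m n i j : ℕ} (hi : i < P) (hj : j < P) (hne : ¬ UnlEquiv R (V m i) (V n j))
    (hle : Int.fract (V m i) ≤ Int.fract (V n j))
    (hclose : 2 * (d * Int.fract (V n j)) < 2 * (d * Int.fract (V m i)) + 1)
    (hwrap : 1 ≤ d * gap (V m) i) (hfloor : ⌊d * gap (V m) i⌋ = ⌊d * gap (V n) j⌋)
    (hhalf : gap (V (n + 1)) j ≤ 1 / 2) :
    ∃ l < P, 1 - gap (V (m + 1)) i < gap (V (n + 1)) l := by
  have hm := hV.polygon m
  let c : ℤ := ⌊V n j⌋ - ⌊V m i⌋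
  have hne' : ¬ UnlEquiv R (V m i + c) (V n j) := fun hequiv =>
    hne ((UnlEquiv.self_add_int _ c).trans hequiv)
  have hshift : V m i + c = ⌊V n j⌋ + Int.fract (V m i) := by
    push_cast [c]
    linarith [Int.floor_add_fract (V m i)]
  have hgap : V m (i + 1) + c - (V m i + c) = gap (V m) i := by rw [gap]; ring
  have hnj := Int.floor_add_fract (V n j)
  have hnj_mul : d * V n j = d * ⌊V n j⌋ + d * Int.fract (V n j) := by rw [← mul_add, hnj]
  have hlt : V m i + c < V n j :=
    (by linarith : V m i + c ≤ V n j).lt_of_ne fun heq => hne' (heq ▸ .refl _)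
  refine (hV.polygon (n + 1)).exists_gap_gt_of_mem_arc (s := d * (V m i + c))
    ((hV.polygon (m + 1)).gap_lt_one hP hi).le fun l hl => ?_
  obtain ⟨k, hk⟩ := hV.step n hl
  obtain ⟨k', hk'⟩ := (hV.polygon n).exists_int_mul_mem_Ioo h
    (irrational_add_intCast_iff.2 (hm.irrational i))
    ⟨irrational_add_intCast_iff.2 (hm.irrational (i + 1)),
      ((hm.mem_of i (i + 1)).2.add_int_left c).add_int_right c⟩
    (by linarith [hm.gap_lt_one hP hi]) hj hne' hlt (by rw [hshift, hnj_mul]; linarith)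
    (hgap ▸ hwrap) (hgap ▸ hfloor) (hV.gap_succ hP n hj ▸ hhalf) hl
  rw [hgap, ← hV.gap_succ hP m hi] at hk'
  refine ⟨k' - k, ?_⟩
  convert hk' using 1
  rw [hk]
  push_cast
  ring

lemma exists_record_wraps (hV : UnlPolygonOrbit d R P u V) (hw : IsWandering d R u)
    (h : InvLiftedLam d R) (hP : 3 ≤ P) :
    ∃ c > 1 / 2, ∃ m < P, ∃ n : ℕ → ℕ, ∀ i < P, i ≠ m → 1 ≤ d * gap (V (n i)) i ∧
      gap (V (n i + 1)) i ≤ 1 - c ∧ ∀ l < P, gap (V (n i + 1)) l ≤ c := by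
  choose! t _ hwrap using fun i (hi : i < P) => hV.exists_wrap h.two_le (by omega) hi 0
  obtain ⟨B, hB⟩ := ((finite_Iio P).image t).bddAbove
  obtain ⟨T, hT, m, hm, hc, hrecord⟩ := exists_record (g := fun n i => gap (V n) i) one_half_lt_one
    (fun n i hi => (hV.polygon n).gap_lt_one (by omega) hi)
    (fun c hc => hV.exists_gap_gt hw h hP hc) (B + 1)
  have hlast (i : ℕ) (hi : i < P) := hV.exists_last_wrap (T := T) (by linarith [h.two_le])
    (by omega) hi ⟨t i, (hB ⟨i, hi, rfl⟩).trans_lt hT, hwrap i hi⟩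
  choose! n hnT hnwrap hngap using hlast
  refine ⟨gap (V T) m, hc, m, hm, n, fun i hi him => ⟨hnwrap i hi, ?_, fun l hl =>
    hrecord _ (hnT i hi) l hl⟩⟩
  linarith [hngap i hi, (hV.polygon T).gap_add_gap_le_one hi hm him]

lemma exists_gap_succ_gt_of_floor_eq (hV : UnlPolygonOrbit d R P u V) (hw : IsWandering d R u)
    (h : InvLiftedLam d R) (hP : 2 ≤ P) {m n i j : ℕ} (hi : i < P) (hj : j < P) (hij : i ≠ j)
    (hgap : ⌊d * gap (V m) i⌋ = ⌊d * gap (V n) j⌋)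
    (hpos : ⌊2 * (d * Int.fract (V m i))⌋ = ⌊2 * (d * Int.fract (V n j))⌋)
    (hle : Int.fract (V m i) ≤ Int.fract (V n j)) (hwrap : 1 ≤ d * gap (V m) i)
    (hhalf : gap (V (n + 1)) j ≤ 1 / 2) :
    ∃ l < P, 1 - gap (V (m + 1)) i < gap (V (n + 1)) l := by
  have hclose := (abs_lt.1 (Int.abs_sub_lt_one_of_floor_eq_floor hpos)).1
  have htime : m ≠ n := by
    rintro rfl
    exact hij ((hV.polygon m).eq_of_fract_le hi hj hle (by nlinarith [h.cast_pos]))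
  have hne : ¬ UnlEquiv R (V m i) (V n j) := fun hequiv => hw.not_unlEquiv htime <| by
    rw [← hV.base, ← hV.base]
    exact (((hV.polygon _).mem i).2.trans hequiv).trans ((hV.polygon _).mem j).2.symm
  exact hV.exists_gap_succ_gt h hP hi hj hne hle (by linarith) hwrap hgap hhalf

lemma floor_mem_Ico (hV : UnlPolygonOrbit d R P u V) (hd : 0 < d) (hP : 2 ≤ P) (n : ℕ) {i : ℕ}
    (hi : i < P) :
    (⌊d * gap (V n) i⌋, ⌊2 * (d * Int.fract (V n i))⌋) ∈
      Finset.Ico (0 : ℤ) d ×ˢ Finset.Ico (0 : ℤ) (2 * d : ℕ) := by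
  have hd' : (0 : ℝ) < d := by exact_mod_cast hd
  have hgap := (hV.polygon n).gap_pos hi
  have hgap_lt := (hV.polygon n).gap_lt_one hP hi
  have hfract := Int.fract_lt_one (V n i)
  rw [Finset.mem_product, Finset.mem_Ico, Finset.mem_Ico]
  refine ⟨⟨Int.floor_nonneg.2 (by positivity), Int.floor_lt.2 ?_⟩,
    Int.floor_nonneg.2 (by positivity), Int.floor_lt.2 ?_⟩
  · push_cast
    nlinarith
  · push_cast
    nlinarith

end UnlPolygonOrbit

/-- The number of sides is chosen so that, besides the record side, there is one more side than
there are values of the pair of integer parts. -/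
lemma IsOrderedWandering.finiteUnlClass {u : ℝ} (hw : IsOrderedWandering d R u)
    (h : InvLiftedLam d R) : FiniteUnlClass R u := by
  by_contra hinf
  obtain ⟨P, hP_eq⟩ : ∃ P, P = d * (2 * d) + 2 := ⟨_, rfl⟩
  have hP : 3 ≤ P := by nlinarith [h.two_le]
  obtain ⟨V, hV⟩ := hw.exists_unlPolygonOrbit h hinf hP
  obtain ⟨c, hc, m, hm, n, hn⟩ := hV.exists_record_wraps hw.toIsWandering h hP
  have no_pair {i j : ℕ} (hi : i < P) (hj : j < P) (him : i ≠ m) (hjm : j ≠ m) (hij : i ≠ j)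
      (hgap : ⌊d * gap (V (n i)) i⌋ = ⌊d * gap (V (n j)) j⌋)
      (hpos : ⌊2 * (d * Int.fract (V (n i) i))⌋ = ⌊2 * (d * Int.fract (V (n j) j))⌋)
      (hle : Int.fract (V (n i) i) ≤ Int.fract (V (n j) j)) : False := by
    obtain ⟨hwrap, hshort, -⟩ := hn i hi him
    obtain ⟨-, hshort', hrecord⟩ := hn j hj hjm
    obtain ⟨l, hl, hlong⟩ := hV.exists_gap_succ_gt_of_floor_eq hw.toIsWandering h (by omega) hi hj
      hij hgap hpos hle hwrap (by linarith)
    linarith [hrecord l hl]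
  have hcard : (Finset.Ico (0 : ℤ) d ×ˢ Finset.Ico (0 : ℤ) (2 * d : ℕ)).card <
      ((Finset.range P).erase m).card := by
    rw [Finset.card_erase_of_mem (Finset.mem_range.2 hm), Finset.card_range, Finset.card_product,
      Int.card_Ico, Int.card_Ico]
    simp only [sub_zero, Int.toNat_natCast]
    omega
  obtain ⟨i, hi, j, hj, hij, heq⟩ := Finset.exists_ne_map_eq_of_card_lt_of_maps_to hcard
    (f := fun i => (⌊d * gap (V (n i)) i⌋, ⌊2 * (d * Int.fract (V (n i) i))⌋))
    fun i hi => hV.floor_mem_Ico (by linarith [h.two_le]) (by omega) (n i)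
      (Finset.mem_range.1 (Finset.mem_of_mem_erase hi))
  obtain ⟨him, hiP⟩ := Finset.mem_erase.1 hi
  obtain ⟨hjm, hjP⟩ := Finset.mem_erase.1 hj
  obtain ⟨hgap, hpos⟩ := Prod.mk.inj heq
  rw [Finset.mem_range] at hiP hjP
  rcases le_total (Int.fract (V (n i) i)) (Int.fract (V (n j) j)) with hle | hle
  · exact no_pair hiP hjP him hjm hij hgap hpos hle
  · exact no_pair hjP hiP hjm him hij.symm hgap.symm hpos.symm hle

namespace InvLiftedLam

lemma finiteUnlClass_of_limitLeaf (h : InvLiftedLam d R) {u v : ℝ} (hl : LimitLeaf R u v)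
    (hu : Irrational u) : FiniteUnlClass R u := by
  obtain ⟨N, hwandering⟩ := h.exists_isWandering_pow_mul hl hu
  obtain ⟨M, hordered⟩ := hwandering.exists_isOrderedWandering_pow_mul h
  by_contra hinf
  exact h.not_finiteUnlClass_pow_mul (h.irrational_pow_mul hu N)
    (h.not_finiteUnlClass_pow_mul hu hinf N) M (hordered.finiteUnlClass h)

lemma rel_of_isUnlGap (h : InvLiftedLam d R) {s u v : ℝ} (hs : Irrational s)
    (hinf : ¬ FiniteUnlClass R s) (hgap : IsUnlGap R s u v) (hlt : v < u + 1) : R u v := by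
  rcases h.rel_or_limitLeaf_of_isUnlGap hs hgap (fun heq => absurd heq hlt.ne) with hr | hl
  · exact hr
  have hu : ¬ Irrational u := fun hu => hinf <|
    (h.finiteUnlClass_of_limitLeaf hl hu).congr
      (h.mem_unlClass_of_mem_closure hs hu hgap.left_mem).2.symm
  exact h.rel_of_limitLeaf hl hu (h.limitLeaf_right_rational hl hu)

end InvLiftedLam

/-! ### Passage to the circle -/

lemma coe_eq_coe_iff_exists_int {x y : ℝ} : (x : Circle1) = y ↔ ∃ k : ℤ, y = x + k := by
  rw [eq_comm, ← sub_eq_zero, ← AddCircle.coe_sub, AddCircle.coe_eq_zero_iff]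
  simp only [zsmul_one, eq_comm, sub_eq_iff_eq_add']

lemma coe_add_int (x : ℝ) (k : ℤ) : ((x + k : ℝ) : Circle1) = x :=
  (coe_eq_coe_iff_exists_int.2 ⟨k, rfl⟩).symm

lemma coe_mem_ratC_iff {x : ℝ} : (x : Circle1) ∈ ratC ↔ ¬ Irrational x := by
  constructor
  · rintro ⟨q, hq⟩ hx
    obtain ⟨k, hk⟩ := coe_eq_coe_iff_exists_int.1 hq
    exact irrational_add_intCast_iff.2 hx ⟨q, hk⟩
  · intro hx
    obtain ⟨q, rfl⟩ := not_not.1 hx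
    exact ⟨q, rfl⟩

lemma md_coe (d : ℕ) (x : ℝ) : md d (x : Circle1) = ((d * x : ℝ) : Circle1) := by
  rw [md, ← AddCircle.coe_nsmul, nsmul_eq_mul]

lemma continuous_coe_circle : Continuous ((↑) : ℝ → Circle1) := AddCircle.continuous_mk' 1

/-- The image in the circle of the open interval `(a, b)`. -/
def circleArc (a b : ℝ) : Set Circle1 := (↑) '' Ioo a b

section circleArc

variable {a b : ℝ}

lemma coe_mem_circleArc_iff {s : ℝ} : (s : Circle1) ∈ circleArc a b ↔ MemArc a b s := by
  constructor
  · rintro ⟨y, hy, heq⟩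
    obtain ⟨k, rfl⟩ := coe_eq_coe_iff_exists_int.1 heq.symm
    exact ⟨k, hy⟩
  · rintro ⟨k, hk⟩
    exact ⟨s + k, hk, coe_add_int s k⟩

lemma isOpen_circleArc (a b : ℝ) : IsOpen (circleArc a b) :=
  QuotientAddGroup.isOpenMap_coe _ isOpen_Ioo

lemma disjoint_circleArc (a b : ℝ) : Disjoint (circleArc a b) (circleArc b (a + 1)) := by
  rw [disjoint_left]
  rintro _ ⟨x, hx, rfl⟩
  rw [coe_mem_circleArc_iff]
  exact not_memArc_of_le hx.2.le (by linarith [hx.1])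

lemma subset_circleArc_union {S : Set Circle1} (ha : (a : Circle1) ∉ S) (hb : (b : Circle1) ∉ S) :
    S ⊆ circleArc a b ∪ circleArc b (a + 1) := by
  intro z hz
  obtain ⟨x, rfl⟩ := QuotientAddGroup.mk_surjective z
  obtain ⟨k, hk⟩ := exists_int_add_mem_Ico x a
  have heq := coe_add_int x k
  have hax : a ≠ x + k := fun hax => ha (by rwa [hax, heq])
  have hbx : b ≠ x + k := fun hbx => hb (by rwa [hbx, heq])
  rcases hbx.lt_or_gt with hlt | hlt
  · exact Or.inr ⟨x + k, ⟨hlt, hk.2⟩, heq⟩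
  · exact Or.inl ⟨x + k, ⟨hk.1.lt_of_ne hax, hlt⟩, heq⟩

lemma subset_circleArc_of_isPreconnected {S : Set Circle1} (hS : IsPreconnected S)
    (ha : (a : Circle1) ∉ S) (hb : (b : Circle1) ∉ S) (hmeet : (S ∩ circleArc a b).Nonempty) :
    S ⊆ circleArc a b :=
  hS.subset_left_of_subset_union (isOpen_circleArc _ _) (isOpen_circleArc _ _)
    (disjoint_circleArc a b) (subset_circleArc_union ha hb) hmeet

lemma frontier_circleArc_subset (a b : ℝ) :
    frontier (circleArc a b) ⊆ {(a : Circle1), (b : Circle1)} := by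
  rw [(isOpen_circleArc a b).frontier_eq]
  rintro z ⟨hz, hz_not⟩
  obtain ⟨y, hy, rfl⟩ : z ∈ ((↑) : ℝ → Circle1) '' Icc a b :=
    closure_minimal (image_mono Ioo_subset_Icc_self)
      (isCompact_Icc.image continuous_coe_circle).isClosed hz
  rcases hy.1.eq_or_lt with rfl | hay
  · exact Or.inl rfl
  rcases hy.2.eq_or_lt with rfl | hyb
  · exact Or.inr rfl
  exact absurd ⟨y, ⟨hay, hyb⟩, rfl⟩ hz_not

lemma connectedComponentIn_compl_eq_circleArc {S : Set Circle1} {x : ℝ} (hx : x ∈ Ioo a b)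
    (ha : (a : Circle1) ∈ S) (hb : (b : Circle1) ∈ S)
    (hdisj : ∀ y ∈ Ioo a b, (y : Circle1) ∉ S) :
    connectedComponentIn Sᶜ (x : Circle1) = circleArc a b := by
  have hsub := connectedComponentIn_subset Sᶜ (x : Circle1)
  refine Subset.antisymm ?_ ?_
  · exact subset_circleArc_of_isPreconnected isPreconnected_connectedComponentIn
      (fun hmem => hsub hmem ha) (fun hmem => hsub hmem hb)
      ⟨x, mem_connectedComponentIn (hdisj x hx), x, hx, rfl⟩
  · refine (isPreconnected_Ioo.image _ continuous_coe_circle.continuousOn)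
      |>.subset_connectedComponentIn ⟨x, hx, rfl⟩ ?_
    rintro _ ⟨y, hy, rfl⟩
    exact hdisj y hy

lemma coe_mem_connectedComponentIn {S : Set Circle1} (hab : a ≤ b)
    (hS : ∀ y ∈ Icc a b, (y : Circle1) ∈ S) :
    (b : Circle1) ∈ connectedComponentIn S (a : Circle1) := by
  refine (isPreconnected_Icc.image _ continuous_coe_circle.continuousOn)
    |>.subset_connectedComponentIn ⟨a, left_mem_Icc.2 hab, rfl⟩ ?_ ⟨b, right_mem_Icc.2 hab, rfl⟩
  rintro _ ⟨y, hy, rfl⟩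
  exact hS y hy

end circleArc

namespace RatLam

/-- The lift to `ℝ` of the equivalence relation of a rational lamination. -/
def liftedRel (lam : RatLam) (x y : ℝ) : Prop := lam.rel x y

lemma liftedRel_of_approx (lam : RatLam) {x y : ℝ} (hx : ¬ Irrational x) (hy : ¬ Irrational y)
    (happrox : ∀ ε > 0, ∃ a b, lam.liftedRel a b ∧ |a - x| < ε ∧ |b - y| < ε) :
    lam.liftedRel x y := by
  refine lam.closed' _ (coe_mem_ratC_iff.2 hx) _ (coe_mem_ratC_iff.2 hy) ?_
  have hmem : (x, y) ∈ closure {p : ℝ × ℝ | lam.liftedRel p.1 p.2} := by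
    refine Metric.mem_closure_iff.2 fun ε hε => ?_
    obtain ⟨a, b, hr, ha, hb⟩ := happrox ε hε
    refine ⟨(a, b), hr, ?_⟩
    rw [dist_comm, Prod.dist_eq, Real.dist_eq, Real.dist_eq]
    exact max_lt ha hb
  exact map_mem_closure (f := Prod.map ((↑) : ℝ → Circle1) ((↑) : ℝ → Circle1))
    (continuous_coe_circle.prodMap continuous_coe_circle) hmem fun _ hp => hp

lemma finite_liftedRel_inter_Icc (lam : RatLam) (x a b : ℝ) :
    {y | lam.liftedRel x y ∧ y ∈ Icc a b}.Finite := by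
  have hfib (z : Circle1) : {y : ℝ | (y : Circle1) = z ∧ y ∈ Icc a b}.Finite := by
    obtain ⟨w, rfl⟩ := QuotientAddGroup.mk_surjective z
    refine ((finite_Icc ⌈a - w⌉ ⌊b - w⌋).image fun k : ℤ => w + k).subset ?_
    rintro y ⟨hy, hay, hyb⟩
    obtain ⟨k, rfl⟩ := coe_eq_coe_iff_exists_int.1 hy.symm
    exact ⟨k, ⟨Int.ceil_le.2 (by linarith), Int.le_floor.2 (by linarith)⟩, rfl⟩
  refine ((lam.finiteClass x).biUnion fun z _ => hfib z).subset fun y hy => ?_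
  exact mem_biUnion (show (y : Circle1) ∈ relClass lam.rel x from hy.1) ⟨rfl, hy.2⟩

lemma memArc_of_mem_connectedComponentIn (lam : RatLam) {a b s t : ℝ} (hr : lam.liftedRel a b)
    {z : Circle1} (hs : (s : Circle1) ∈ connectedComponentIn (relClass lam.rel a)ᶜ z)
    (ht : (t : Circle1) ∈ connectedComponentIn (relClass lam.rel a)ᶜ z) (hmem : MemArc a b s) :
    MemArc a b t := by
  have hsub := connectedComponentIn_subset (relClass lam.rel a)ᶜ z
  exact coe_mem_circleArc_iff.1 <| subset_circleArc_of_isPreconnected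
    isPreconnected_connectedComponentIn
    (fun ha => hsub ha (lam.refl _ (lam.rel_rat _ _ hr).1)) (fun hb => hsub hb hr)
    ⟨s, hs, coe_mem_circleArc_iff.2 hmem⟩ ht

lemma liftedRel_of_linked (lam : RatLam) {a b c e : ℝ} (hab : a < b) (hbc : b < c) (hce : c < e)
    (hea : e < a + 1) (hac : lam.liftedRel a c) (hbe : lam.liftedRel b e) : lam.liftedRel a b := by
  by_contra hnot
  obtain ⟨z, -, hsub⟩ := lam.unlinkedClass _ _ hnot
  have hb : (b : Circle1) ∈ relClass lam.rel b := lam.refl _ (lam.rel_rat _ _ hbe).1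
  have ⟨k, hk⟩ := lam.memArc_of_mem_connectedComponentIn hac (hsub hb) (hsub hbe)
    ⟨0, by simpa using ⟨hab, hbc⟩⟩
  have hneg : (k : ℝ) < 0 := by linarith [hk.2]
  have hgt : (-1 : ℝ) < k := by linarith [hk.1]
  norm_cast at hneg hgt
  omega

lemma liftedLam (lam : RatLam) : LiftedLam lam.liftedRel where
  rational_left hr := coe_mem_ratC_iff.1 (lam.rel_rat _ _ hr).1
  refl hx := lam.refl _ (coe_mem_ratC_iff.2 hx)
  symm hr := lam.symm _ _ hr
  trans hxy hyz := lam.trans _ _ _ hxy hyz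
  add_one {x} hx := by
    rw [liftedRel, AddCircle.coe_add_period]
    exact lam.refl _ (coe_mem_ratC_iff.2 hx)
  closed := lam.liftedRel_of_approx
  finite_inter_Icc := lam.finite_liftedRel_inter_Icc
  unlinked := lam.liftedRel_of_linked

lemma invLiftedLam (lam : RatLam) (hd : 2 ≤ d)
    (hinv : ∀ x ∈ ratC, md d '' relClass lam.rel x = relClass lam.rel (md d x)) :
    InvLiftedLam d lam.liftedRel where
  toLiftedLam := lam.liftedLam
  two_le := hd
  map_mul {x y} hr := by
    have hmem : md d y ∈ relClass lam.rel (md d x) :=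
      hinv _ (lam.rel_rat _ _ hr).1 ▸ mem_image_of_mem _ hr
    rwa [md_coe, md_coe] at hmem
  exists_preimage {x z} hx hr := by
    have hmem : (z : Circle1) ∈ relClass lam.rel (md d x) := by rwa [md_coe]
    rw [← hinv _ (coe_mem_ratC_iff.2 hx)] at hmem
    obtain ⟨w, hw, heq⟩ := hmem
    obtain ⟨y, rfl⟩ := QuotientAddGroup.mk_surjective w
    obtain ⟨k, hk⟩ := coe_eq_coe_iff_exists_int.1 ((md_coe d y).symm.trans heq).symm
    exact ⟨y, k, hw, hk⟩

lemma unlEquiv_of_unlRel (lam : RatLam) {s t : ℝ} (hst : UnlRel lam.rel s t) :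
    UnlEquiv lam.liftedRel s t := by
  obtain ⟨hs, -, heq | hcomp⟩ := hst
  · obtain ⟨k, rfl⟩ := coe_eq_coe_iff_exists_int.1 heq
    exact .self_add_int s k
  · intro a b hr _ _
    have hs_mem : (s : Circle1) ∈ connectedComponentIn (relClass lam.rel a)ᶜ s :=
      mem_connectedComponentIn fun hmem => hs (lam.rel_rat _ _ hmem).2
    have ht_mem := hcomp _ (lam.rel_rat _ _ hr).1
    exact ⟨lam.memArc_of_mem_connectedComponentIn hr hs_mem ht_mem,
      lam.memArc_of_mem_connectedComponentIn hr ht_mem hs_mem⟩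

/-- A class that meets both arcs between `s` and `t` contains a chord separating them. -/
lemma mem_connectedComponentIn_of_unlEquiv (lam : RatLam) {s t : ℝ} (hs : Irrational s)
    (ht : Irrational t) (hst : UnlEquiv lam.liftedRel s t) (htI : t ∈ Ico s (s + 1)) (x : Circle1) :
    (t : Circle1) ∈ connectedComponentIn (relClass lam.rel x)ᶜ (s : Circle1) := by
  have ne_of_mem {y z : ℝ} (hy : Irrational y) (hz : (z : Circle1) ∈ relClass lam.rel x) :
      y ≠ z := by
    rintro rfl
    exact coe_mem_ratC_iff.1 (lam.rel_rat _ _ hz).2 hy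
  by_cases hfirst : ∀ y ∈ Icc s t, (y : Circle1) ∉ relClass lam.rel x
  · exact coe_mem_connectedComponentIn htI.1 hfirst
  by_cases hsecond : ∀ y ∈ Icc t (s + 1), (y : Circle1) ∉ relClass lam.rel x
  · have hmem := coe_mem_connectedComponentIn (S := (relClass lam.rel x)ᶜ) htI.2.le hsecond
    rw [AddCircle.coe_add_period] at hmem
    rw [← connectedComponentIn_eq hmem]
    exact mem_connectedComponentIn (hsecond t (left_mem_Icc.2 htI.2.le))
  push Not at hfirst hsecond
  obtain ⟨a, ha, hxa⟩ := hfirst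
  obtain ⟨b, hb, hxb⟩ := hsecond
  have hs_one : Irrational (s + 1) := by
    exact_mod_cast (irrational_add_intCast_iff (m := 1)).2 hs
  exact (hst.not_separated (lam.trans _ _ _ (lam.symm _ _ hxa) hxb)
    (ha.1.lt_of_ne (ne_of_mem hs hxa)) (ha.2.lt_of_ne (ne_of_mem ht hxa).symm)
    (hb.1.lt_of_ne (ne_of_mem ht hxb)) (hb.2.lt_of_ne (ne_of_mem hs_one hxb).symm)).elim

lemma unlRel_coe_iff (lam : RatLam) {s t : ℝ} (hs : Irrational s) :
    UnlRel lam.rel s t ↔ t ∈ unlClass lam.liftedRel s := by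
  constructor
  · intro hst
    exact ⟨not_not.1 fun ht => hst.2.1 (coe_mem_ratC_iff.2 ht), lam.unlEquiv_of_unlRel hst⟩
  · rintro ⟨ht, hst⟩
    obtain ⟨k, hk⟩ := exists_int_add_mem_Ico t s
    refine ⟨fun hmem => coe_mem_ratC_iff.1 hmem hs, fun hmem => coe_mem_ratC_iff.1 hmem ht,
      Or.inr fun x _ => ?_⟩
    rw [← coe_add_int t k]
    exact lam.mem_connectedComponentIn_of_unlEquiv hs (irrational_add_intCast_iff.2 ht)
      (hst.add_int_right k) hk x

lemma preimage_unlRel (lam : RatLam) {s : ℝ} (hs : Irrational s) :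
    ((↑) : ℝ → Circle1) ⁻¹' {z | UnlRel lam.rel s z} = unlClass lam.liftedRel s :=
  ext fun _ => lam.unlRel_coe_iff hs

lemma coe_mem_closure_unlRel_iff (lam : RatLam) {s t : ℝ} (hs : Irrational s) :
    (t : Circle1) ∈ closure {z | UnlRel lam.rel s z} ↔ t ∈ closure (unlClass lam.liftedRel s) := by
  rw [← lam.preimage_unlRel hs, ← IsOpenMap.preimage_closure_eq_closure_preimage
    QuotientAddGroup.isOpenMap_coe continuous_coe_circle, mem_preimage]

lemma not_finiteUnlClass_of_infinite (lam : RatLam) {s : ℝ} (hs : Irrational s)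
    (hinf : {z | UnlRel lam.rel s z}.Infinite) : ¬ FiniteUnlClass lam.liftedRel s := by
  refine fun hfin => hinf (((hfin 0 1).image ((↑) : ℝ → Circle1)).subset fun z hz => ?_)
  obtain ⟨x, rfl⟩ := QuotientAddGroup.mk_surjective z
  obtain ⟨k, hk⟩ := exists_int_add_mem_Ico x 0
  rw [zero_add] at hk
  exact ⟨x + k, ⟨add_int_mem_unlClass ((lam.unlRel_coe_iff hs).1 hz) k, Ico_subset_Icc_self hk⟩,
    coe_add_int x k⟩

end RatLam

lemma exists_Ioo_disjoint_of_isClosed {T : Set ℝ} (hT : IsClosed T) (hne : T.Nonempty)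
    (hper : ∀ t ∈ T, ∀ k : ℤ, t + k ∈ T) {x : ℝ} (hx : x ∉ T) :
    ∃ u ∈ T, ∃ v ∈ T, x ∈ Ioo u v ∧ v ≤ u + 1 ∧ Disjoint (Ioo u v) T := by
  obtain ⟨t, ht⟩ := hne
  obtain ⟨k, hk⟩ := exists_int_add_mem_Ico t (x - 1)
  have hkx : t + k ≤ x := by linarith [hk.2]
  obtain ⟨l, hl⟩ := exists_int_add_mem_Ico t x
  obtain ⟨u, ⟨hu, hux⟩, hu_max⟩ : ∃ u, IsGreatest (T ∩ Iic x) u :=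
    ⟨_, (hT.inter isClosed_Iic).isGreatest_csSup ⟨t + k, hper t ht k, hkx⟩ ⟨x, fun _ hy => hy.2⟩⟩
  obtain ⟨v, ⟨hv, hxv⟩, hv_min⟩ : ∃ v, IsLeast (T ∩ Ici x) v :=
    ⟨_, (hT.inter isClosed_Ici).isLeast_csInf ⟨t + l, hper t ht l, hl.1⟩ ⟨x, fun _ hy => hy.2⟩⟩
  have hu_one : u + 1 ∈ T := by exact_mod_cast hper u hu 1
  have hx_lt : x < u + 1 := not_le.1 fun hle => by
    linarith [mem_upperBounds.1 hu_max _ ⟨hu_one, hle⟩]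
  refine ⟨u, hu, v, hv, ⟨lt_of_le_of_ne hux ?_, lt_of_le_of_ne hxv ?_⟩,
    hv_min ⟨hu_one, hx_lt.le⟩, disjoint_left.2 fun y hy hyT => ?_⟩
  · rintro rfl
    exact hx hu
  · rintro rfl
    exact hx hv
  · rcases le_total y x with hle | hle
    · exact hy.1.not_ge (hu_max ⟨hyT, hle⟩)
    · exact hy.2.not_ge (hv_min ⟨hyT, hle⟩)

lemma exists_isUnlGap_of_notMem_closure {s x : ℝ} (hs : Irrational s)
    (hx : x ∉ closure (unlClass R s)) : ∃ u v, IsUnlGap R s u v ∧ x ∈ Ioo u v := by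
  have hper (t) (ht : t ∈ closure (unlClass R s)) (k : ℤ) : t + k ∈ closure (unlClass R s) :=
    map_mem_closure (f := (· + (k : ℝ))) (continuous_add_const _) ht fun _ hmem =>
      add_int_mem_unlClass hmem k
  obtain ⟨u, hu, v, hv, hxuv, hle, hdisj⟩ := exists_Ioo_disjoint_of_isClosed isClosed_closure
    ⟨s, subset_closure (mem_unlClass_self hs)⟩ hper hx
  exact ⟨u, v, ⟨hxuv.1.trans hxuv.2, hle, hu, hv, hdisj.mono_right subset_closure⟩, hxuv⟩

lemma RatLam.exists_isUnlGap_of_isCompOf (lam : RatLam) {s : ℝ} (hs : Irrational s)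
    {C : Set Circle1} (hC : IsCompOf C (closure {z | UnlRel lam.rel s z})ᶜ) :
    ∃ u v, IsUnlGap lam.liftedRel s u v ∧ C = circleArc u v := by
  obtain ⟨z, hz, rfl⟩ := hC
  obtain ⟨x, rfl⟩ := QuotientAddGroup.mk_surjective z
  obtain ⟨u, v, hgap, hx⟩ := exists_isUnlGap_of_notMem_closure hs
    (mt (lam.coe_mem_closure_unlRel_iff hs).2 hz)
  have hdisj : Disjoint (Ioo u v) (closure (unlClass lam.liftedRel s)) :=
    hgap.disjoint.closure_right isOpen_Ioo
  exact ⟨u, v, hgap, connectedComponentIn_compl_eq_circleArc hx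
    ((lam.coe_mem_closure_unlRel_iff hs).2 hgap.left_mem)
    ((lam.coe_mem_closure_unlRel_iff hs).2 hgap.right_mem)
    fun y hy hmem => disjoint_left.1 hdisj hy ((lam.coe_mem_closure_unlRel_iff hs).1 hmem)⟩

theorem gap_endpoints_rational_and_equivalent_general (d : ℕ) (hd : 2 ≤ d) (lam : RatLam)
    (hinv : ∀ x ∈ ratC, md d '' relClass lam.rel x = relClass lam.rel (md d x))
    (L : Set Circle1) (hL : IsUnlClass lam.rel L) (hinf : L.Infinite) (C : Set Circle1)
    (hC : IsCompOf C (closure L)ᶜ) (θ θ' : Circle1) (hne : θ ≠ θ') (hfr : frontier C = {θ, θ'}) :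
    θ ∈ ratC ∧ θ' ∈ ratC ∧ lam.rel θ θ' := by
  suffices hrel : lam.rel θ θ' from ⟨(lam.rel_rat _ _ hrel).1, (lam.rel_rat _ _ hrel).2, hrel⟩
  obtain ⟨z, hz, rfl⟩ := hL
  obtain ⟨s, rfl⟩ := QuotientAddGroup.mk_surjective z
  have hs : Irrational s := not_not.1 fun hs => hz (coe_mem_ratC_iff.2 hs)
  obtain ⟨u, v, hgap, rfl⟩ := lam.exists_isUnlGap_of_isCompOf hs hC
  have hends : {θ, θ'} ⊆ ({(u : Circle1), (v : Circle1)} : Set Circle1) :=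
    hfr ▸ frontier_circleArc_subset u v
  have hlt : v < u + 1 := hgap.le_add_one.lt_of_ne fun heq => hne <| by
    rw [heq, AddCircle.coe_add_period, pair_eq_singleton] at hends
    exact (hends (mem_insert θ {θ'})).trans (hends (mem_insert_of_mem θ rfl)).symm
  have hr : lam.rel u v := (lam.invLiftedLam hd hinv).rel_of_isUnlGap hs
    (lam.not_finiteUnlClass_of_infinite hs hinf) hgap hlt
  rcases hends (mem_insert θ {θ'}) with rfl | rfl <;>
    rcases hends (mem_insert_of_mem _ rfl) with rfl | rfl
  exacts [absurd rfl hne, hr, lam.symm _ _ hr, absurd rfl hne]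

/-- If `L` is an infinite `λ`-unlinked class and `(θ, θ')` is a
connected component of `(ℝ/ℤ) \ closure L` (an open arc with frontier `{θ, θ'}`),
then `θ` and `θ'` are rational and `λ`-equivalent. -/
theorem gap_endpoints_rational_and_equivalent (d : ℕ) (hd : 2 ≤ d)
    (lam : InvRatLam d) (L : Set Circle1) (hL : IsUnlClass lam.rel L)
    (hinf : L.Infinite) (C : Set Circle1) (hC : IsCompOf C (closure L)ᶜ)
    (θ θ' : Circle1) (hne : θ ≠ θ') (hfr : frontier C = {θ, θ'}) :
    θ ∈ ratC ∧ θ' ∈ ratC ∧ lam.rel θ θ' :=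
  gap_endpoints_rational_and_equivalent_general d hd lam.toRatLam
    (fun x hx => (lam.invariant x hx).1) L hL hinf C hC θ θ' hne hfr
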